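/- arXiv:1011.1902 — 5 statements merged into one kernel-verified Lean document; each statement's English description precedes it below -/
import Mathlib

section
/- Let p be an odd prime. Then ∑_{(p-1)/2 < k ≤ p-1} (4k+1)·C(2k,k)^3/(-64)^k ≡ 0 (mod p^4), as a congruence of rational numbers (the p-adic valuation of the sum is at least 4). -/
/-!
Write `p = 2n + 1`. For `n < k < p` the prime `p` divides `C(2k,k)`, so each term is divisible
by `p ^ 3`; dividing that out, it remains to show that
`∑ (4k+1) (C(2k,k)/p)^3 / (-64)^k` vanishes modulo `p`.

Put `k = n + 1 + i` with `0 ≤ i ≤ m := n - 1`, and `w i = (C(2k,k)/p) / (-4)^k` in `ZMod p`.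
The recurrence of the central binomial coefficients becomes `(m - i) w (i+1) = (i+1) w i`, so
`C(m,i) * w i` is constant (`choose_mul_const`), and therefore `w i = w (m - i)`. On the other
hand `4k + 1 ≡ 4i + 3 (mod p)` changes sign under `i ↦ m - i`, since
`(4i + 3) + (4(m - i) + 3) = 2p`. Hence the sum is its own negative (`sum_eq_zero_of_rec`).
-/

/-- A solution of `(m - i) w (i+1) = (i+1) w i` over `ZMod p` is a constant divided by `C(m,i)`. -/
lemma choose_mul_const (p : ℕ) [Fact p.Prime] (m : ℕ) (hm : m < p) (w : ℕ → ZMod p)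
    (hw : ∀ i < m, ((m - i : ℕ) : ZMod p) * w (i + 1) = ((i + 1 : ℕ) : ZMod p) * w i) :
    ∀ i ≤ m, (m.choose i : ZMod p) * w i = w 0 := by
  intro i
  induction i with
  | zero => intro _; simp
  | succ i ih =>
    intro hi
    have hne : ((m - i : ℕ) : ZMod p) ≠ 0 := by
      rw [Ne, ZMod.natCast_eq_zero_iff]
      exact Nat.not_dvd_of_pos_of_lt (by omega) (by omega)
    have h1 : (m.choose (i + 1) : ZMod p) * ((i + 1 : ℕ) : ZMod p)
        = (m.choose i : ZMod p) * ((m - i : ℕ) : ZMod p) := by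
      exact_mod_cast congrArg (Nat.cast (R := ZMod p)) (Nat.choose_succ_right_eq m i)
    have h2 := hw i (by omega)
    have h3 := ih (by omega)
    apply mul_left_cancel₀ hne
    linear_combination (m.choose (i + 1) : ZMod p) * h2 + w i * h1 + ((m - i : ℕ) : ZMod p) * h3

lemma sum_eq_zero_of_rec (p n : ℕ) [Fact p.Prime] (hpn : p = 2 * n + 1) (w : ℕ → ZMod p)
    (hw : ∀ i < n - 1,
      ((n - 1 - i : ℕ) : ZMod p) * w (i + 1) = ((i + 1 : ℕ) : ZMod p) * w i) :
    ∑ i ∈ Finset.range n, (4 * i + 3 : ZMod p) * w i ^ 3 = 0 := by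
  have hc := choose_mul_const p (n - 1) (by omega) w hw
  have hp0 : (2 * n + 1 : ZMod p) = 0 := by
    have := ZMod.natCast_self p
    conv at this => lhs; arg 1; rw [hpn]
    exact_mod_cast this
  have hsym : ∀ i ∈ Finset.range n, w (n - 1 - i) = w i := by
    intro i hi
    rw [Finset.mem_range] at hi
    have hne : ((n - 1).choose i : ZMod p) ≠ 0 := by
      rw [Ne, ZMod.natCast_eq_zero_iff]
      intro hd
      have h1 : p ∣ (n - 1).factorial := by
        rw [← Nat.choose_mul_factorial_mul_factorial (show i ≤ n - 1 by omega), mul_assoc]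
        exact hd.mul_right _
      have := (Nat.Prime.dvd_factorial Fact.out).1 h1
      omega
    have h1 := hc i (by omega)
    have h2 := hc (n - 1 - i) (by omega)
    rw [Nat.choose_symm (by omega)] at h2
    exact mul_left_cancel₀ hne (h2.trans h1.symm)
  have hrefl : ∑ i ∈ Finset.range n, (4 * i + 3 : ZMod p) * w i ^ 3
      = -∑ i ∈ Finset.range n, (4 * i + 3 : ZMod p) * w i ^ 3 := by
    conv_lhs => rw [← Finset.sum_range_reflect]
    rw [← Finset.sum_neg_distrib]
    refine Finset.sum_congr rfl fun i hi => ?_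
    rw [hsym i hi]
    rw [Finset.mem_range] at hi
    have h : ((n - 1 - i : ℕ) : ZMod p) + i + 1 = n := by
      exact_mod_cast congrArg (Nat.cast (R := ZMod p)) (show n - 1 - i + i + 1 = n by omega)
    linear_combination (4 * w i ^ 3) * h + 2 * w i ^ 3 * hp0
  have h2 : (2 : ZMod p) ≠ 0 := by
    intro h
    have h' : ((2 : ℕ) : ZMod p) = 0 := by exact_mod_cast h
    rw [ZMod.natCast_eq_zero_iff] at h'
    have h3 := Nat.le_of_dvd (by norm_num) h'
    have h4 := (Fact.out : p.Prime).two_le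
    omega
  apply (mul_eq_zero.1 (show (2 : ZMod p) * _ = 0 from ?_)).resolve_left h2
  linear_combination hrefl

/-- For an odd prime `p`, `∑_{(p-1)/2 < k ≤ p-1} (4k+1) C(2k,k)^3/(-64)^k ≡ 0 (mod p^4)`,
i.e. the `p`-adic valuation of the (rational) sum is at least `4`. -/
theorem sun_tail_sum_cong_zero (p : ℕ) (hp : p.Prime) (hodd : Odd p) :
    padicNorm p (∑ k ∈ Finset.Ioc ((p - 1) / 2) (p - 1),
      (4 * k + 1 : ℚ) * (Nat.choose (2 * k) k : ℚ) ^ 3 / (-64) ^ k) ≤ (p : ℚ) ^ (-4 : ℤ) := by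
  have : Fact p.Prime := ⟨hp⟩
  obtain ⟨n, hpn⟩ := hodd
  have hdvd : ∀ i, ∃ c : ℕ, i < n → Nat.centralBinom (n + 1 + i) = p * c := by
    intro i
    by_cases hi : i < n
    · have : p ∣ (2 * (n + 1 + i)).choose (n + 1 + i) :=
        hp.dvd_choose (by omega) (by omega) (by omega)
      obtain ⟨c, hc⟩ := this
      exact ⟨c, fun _ => hc⟩
    · exact ⟨0, fun h => absurd h hi⟩
  choose c hc using hdvd
  have hp0 : (2 * n + 1 : ZMod p) = 0 := by
    have := ZMod.natCast_self p
    conv at this => lhs; arg 1; rw [hpn]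
    exact_mod_cast this
  have h4 : (-4 : ZMod p) ≠ 0 := by
    intro h
    have h' : ((4 : ℕ) : ZMod p) = 0 := by
      push_cast
      linear_combination -h
    rw [ZMod.natCast_eq_zero_iff] at h'
    have h3 : p ∣ 2 := hp.dvd_of_dvd_pow (n := 2) (by simpa using h')
    have h5 := Nat.le_of_dvd (by norm_num) h3
    have h6 := hp.two_le
    omega
  have hrec : ∀ i < n - 1, ((n - 1 - i : ℕ) : ZMod p) * (c (i + 1) / (-4) ^ (n + 1 + (i + 1)))
      = ((i + 1 : ℕ) : ZMod p) * (c i / (-4) ^ (n + 1 + i)) := by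
    intro i hi
    have h1 := Nat.succ_mul_centralBinom_succ (n + 1 + i)
    have e1 := hc (i + 1) (by omega)
    rw [show n + 1 + (i + 1) = n + 1 + i + 1 by omega] at e1
    rw [e1, hc i (by omega)] at h1
    have h2 : (n + 1 + i + 1) * c (i + 1) = 2 * (2 * (n + 1 + i) + 1) * c i := by
      apply Nat.eq_of_mul_eq_mul_left hp.pos
      linarith
    have h3 : ((n : ZMod p) + 1 + i + 1) * c (i + 1) = 2 * (2 * (n + 1 + i) + 1) * c i := by
      exact_mod_cast congrArg (Nat.cast (R := ZMod p)) h2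
    have h : ((n - 1 - i : ℕ) : ZMod p) + i + 1 = n := by
      exact_mod_cast congrArg (Nat.cast (R := ZMod p)) (show n - 1 - i + i + 1 = n by omega)
    have h5 : ((n - 1 - i : ℕ) : ZMod p) * c (i + 1)
        = -4 * (((i + 1 : ℕ) : ZMod p) * c i) := by
      push_cast
      -- `n - 1 - i` and `-(n + 2 + i)` differ by `2n + 1 = p`
      linear_combination (c (i + 1) : ZMod p) * h - h3
        + (c (i + 1) - 2 * c i : ZMod p) * hp0
    have h6 : ((-4 : ZMod p)) ^ (n + 1 + i) ≠ 0 := pow_ne_zero _ h4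
    rw [show n + 1 + (i + 1) = n + 1 + i + 1 by omega, pow_succ, mul_div_assoc', mul_div_assoc',
      h5, div_eq_div_iff (mul_ne_zero h6 h4) h6]
    ring
  have hsum := sum_eq_zero_of_rec p n hpn (fun i => (c i : ZMod p) / (-4) ^ (n + 1 + i)) hrec
  -- the sum divided by `p ^ 3`, with denominators cleared
  let Z : ℤ := ∑ i ∈ Finset.range n,
    (4 * (n + 1 + i) + 1 : ℤ) * (c i : ℤ) ^ 3 * (-64) ^ (n - 1 - i)
  have hZ : ((Z : ℤ) : ZMod p) = 0 := by
    have : ((Z : ℤ) : ZMod p) = (-64) ^ (2 * n) * ∑ i ∈ Finset.range n,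
        (4 * i + 3 : ZMod p) * ((c i : ZMod p) / (-4) ^ (n + 1 + i)) ^ 3 := by
      rw [Finset.mul_sum]
      simp only [Z]
      push_cast
      refine Finset.sum_congr rfl fun i hi => ?_
      rw [Finset.mem_range] at hi
      have e : (-64 : ZMod p) ^ (2 * n) = (-64) ^ (n - 1 - i) * ((-4) ^ (n + 1 + i)) ^ 3 := by
        rw [pow_right_comm, show (-4 : ZMod p) ^ 3 = -64 by norm_num, ← pow_add]
        congr 1
        omega
      have h6 : ((-4 : ZMod p)) ^ (n + 1 + i) ≠ 0 := pow_ne_zero _ h4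
      rw [e]
      field_simp
      linear_combination 2 * c i ^ 3 * (-64) ^ (n - 1 - i) * hp0
    rw [this, hsum, mul_zero]
  obtain ⟨z, hz⟩ := (ZMod.intCast_zmod_eq_zero_iff_dvd Z p).1 hZ
  have hS : (∑ k ∈ Finset.Ioc ((p - 1) / 2) (p - 1),
      (4 * k + 1 : ℚ) * (Nat.choose (2 * k) k : ℚ) ^ 3 / (-64) ^ k)
      = (p : ℚ) ^ 4 * (z : ℤ) / (((-64) ^ (2 * n) : ℤ) : ℚ) := by
    have hI : Finset.Ioc ((p - 1) / 2) (p - 1) = Finset.Ico (n + 1) (2 * n + 1) := by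
      ext k
      simp only [Finset.mem_Ioc, Finset.mem_Ico]
      omega
    rw [hI, Finset.sum_Ico_eq_sum_range, show 2 * n + 1 - (n + 1) = n by omega]
    have hz' : (p : ℚ) ^ 4 * (z : ℤ) = (p : ℚ) ^ 3 * (Z : ℤ) := by
      rw [hz]
      push_cast
      ring
    rw [hz', eq_div_iff (by positivity), Finset.sum_mul]
    simp only [Z]
    push_cast
    rw [Finset.mul_sum]
    refine Finset.sum_congr rfl fun i hi => ?_
    rw [Finset.mem_range] at hi
    have e0 : (Nat.choose (2 * (n + 1 + i)) (n + 1 + i) : ℚ) = p * c i := by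
      exact_mod_cast congrArg (Nat.cast (R := ℚ)) (hc i hi)
    have e : (-64 : ℚ) ^ (2 * n) = (-64) ^ (n - 1 - i) * (-64) ^ (n + 1 + i) := by
      rw [← pow_add]
      congr 1
      omega
    have h6 : ((-64 : ℚ)) ^ (n + 1 + i) ≠ 0 := pow_ne_zero _ (by norm_num)
    rw [e0, e]
    field_simp
  have h64 : padicNorm p (((-64) ^ (2 * n) : ℤ) : ℚ) = 1 := by
    rw [padicNorm.int_eq_one_iff]
    intro h
    have h' := (ZMod.intCast_zmod_eq_zero_iff_dvd _ p).2 h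
    push_cast at h'
    rw [show (-64 : ZMod p) = (-4) ^ 3 by norm_num] at h'
    exact pow_ne_zero _ (pow_ne_zero _ h4) h'
  have hp4 : padicNorm p ((p : ℚ) ^ 4) = (p : ℚ) ^ (-4 : ℤ) := by
    rw [show (p : ℚ) ^ 4 = p * p * (p * p) by ring, padicNorm.mul, padicNorm.mul,
      padicNorm.padicNorm_p_of_prime, zpow_neg,
      show ((p : ℚ) ^ (4 : ℤ)) = p * p * (p * p) by norm_cast; ring]
    simp only [mul_inv]
  rw [hS, padicNorm.div, padicNorm.mul, h64, div_one, hp4]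
  exact mul_le_of_le_one_right (by positivity) (padicNorm.of_int z)
end

section
/- Let p > 3 be a prime. Then ∑_{k=0}^{(p-1)/2} (20k+3)/(-2^10)^k · (4k)!/(k!)^4 ≡ (-1)^((p-1)/2) · p · (2^(p-1) + 2 − (2^(p-1) − 1)^2) (mod p^4), as a congruence of rational numbers (the p-adic valuation of the difference is at least 4). -/
/-!
Write `p = 2N + 1` and `u = C(2N, N)`. The summand is `F(n, 0)` for the WZ pair
`F(n,k) - F(n,k+1) = G(n+1,k) - G(n,k)` given by `wzF`, `wzG` below. Since `G(0,k) = 0` and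
`F(n,N) = 0` for `n < N`, the sum over `n ≤ N` equals `F(N,N) + ∑_{k<N} G(N+1,k)` exactly
(`wz_half_sum`). Both parts are then evaluated modulo `p⁴` in the ring of `p`-integral rationals.

* `F(N,N) = 3 p u W₁ W₂ / (256^N V)` with `W_a = ∏_{i=1}^{2N} (1 + ap/i) ≡ 1 (mod p³)`
  (`wolstenholme`) and `V = ∏_{i=1}^N (1 + p/i)`. As `∏_{i=1}^N (1 - p/i) = (-1)^N u`, one has
  `(-1)^N u V = ∏ (1 - p²/i²) ≡ 1 (mod p³)`. Morley's congruence gives `u² ≡ 256^N (mod p³)`, so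
  `F(N,N) ≡ 3 (-1)^N p (mod p⁴)`.
* With `x_j = 1/(2j+1)`,
  `G(N+1,k) = (-1)^N p² W₁ u² / 1024^N · x_k (1 + 2p x_k) ∏_{j<k} (1 + 2p x_j)(1 - p x_j)`.
  Modulo `p²` the sum over `k` of the factor after the dot is `∑ x_k ∏_{j<k} (1 + p x_j)`, which
  telescopes to `(∏_{j<N} (1 + p x_j) - 1)/p = (4^N - 1)/p`, the Fermat quotient `q` of `2`. Hence
  `∑ G(N+1,k) ≡ (-1)^N p² q/(1 + pq) ≡ (-1)^N p (pq - p²q²) (mod p⁴)`.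

Morley's congruence comes from the exact values `∏_{j<N} (1 + p x_j) = 4^N` and
`∏_{j<N} (1 - p x_j) = (-1)^N 4^N / u`, whose product is `∏ (1 - p² x_j²) ≡ 1 (mod p³)`. All these
congruences rest on `∑_{i≤N} 1/i² ≡ ∑_{j<N} 1/(2j+1)² ≡ 0 (mod p)`, valid for `p > 3`.
-/

section

open Finset

/-! ### The WZ pair and exact evaluations -/

/-- The first member `F(n,k)` of the WZ pair; `F(n,0)` is the summand of the theorem. The factor
`1/(n-k)!` is written as `n.descFactorial k / n!`, so that `F(n,k) = 0` for `k > n`; the product in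
the denominator is `(2k-1)!!`. -/
def wzF (n k : ℕ) : ℚ :=
  (20 * n - 2 * k + 3) * ((-1) ^ k * (4 * n + 2 * k).factorial * (2 * n).factorial *
    n.descFactorial k /
    ((2 * n + k).factorial * n.factorial ^ 4 * (-1024) ^ n * (∏ j ∈ range k, (2 * j + 1 : ℚ)) ^ 2))

/-- The second member of the WZ pair, indexed so that
`F(n,k) - F(n,k+1) = G(n+1,k) - G(n,k)`. -/
def wzG (n k : ℕ) : ℚ :=
  128 * n ^ 2 * ((-1) ^ (k + 1) * (4 * n + 2 * k).factorial * (2 * n).factorial *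
    n.descFactorial (k + 1) /
    ((2 * n + k).factorial * n.factorial ^ 4 * (-1024) ^ n *
      (∏ j ∈ range (k + 1), (2 * j + 1 : ℚ)) ^ 2))

lemma oddProd_ne_zero (k : ℕ) : (∏ j ∈ range k, (2 * j + 1 : ℚ)) ≠ 0 :=
  prod_ne_zero_iff.2 fun j _ => by positivity

lemma cast_descFactorial_succ (n k : ℕ) :
    (n.descFactorial (k + 1) : ℚ) = (n - k) * n.descFactorial k := by
  rw [Nat.descFactorial_succ]
  rcases le_or_gt k n with h | h
  · push_cast [h]; ring
  · simp [Nat.descFactorial_eq_zero_iff_lt.2 h]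

lemma wz_identity (n k : ℕ) :
    wzF n k - wzF n (k + 1) = wzG (n + 1) k - wzG n k := by
  have e1 : 4 * (n + 1) + 2 * k = 4 * n + 2 * k + 1 + 1 + 1 + 1 := by ring
  have e2 : 4 * n + 2 * (k + 1) = 4 * n + 2 * k + 1 + 1 := by ring
  have e3 : 2 * (n + 1) = 2 * n + 1 + 1 := by ring
  have e4 : 2 * n + 1 + 1 + k = 2 * n + k + 1 + 1 := by ring
  have e5 : 2 * n + (k + 1) = 2 * n + k + 1 := by ring
  unfold wzF wzG
  rw [e1, e2, e3, e4, e5, Nat.succ_descFactorial_succ]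
  simp only [Nat.factorial_succ, prod_range_succ, Nat.cast_mul, cast_descFactorial_succ]
  have hD := oddProd_ne_zero k
  have h1 : ((4 * n + 2 * k).factorial : ℚ) ≠ 0 := by positivity
  have h2 : ((2 * n + k).factorial : ℚ) ≠ 0 := by positivity
  have h3 : ((2 * n).factorial : ℚ) ≠ 0 := by positivity
  have h4 : (n.factorial : ℚ) ≠ 0 := by positivity
  have h5 : ((2 * n : ℚ) + k + 1) ≠ 0 := by positivity
  have h6 : ((2 * n : ℚ) + k + 1 + 1) ≠ 0 := by positivity
  have h7 : ((2 * k : ℚ) + 1) ≠ 0 := by positivity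
  have h8 : ((n : ℚ) + 1) ≠ 0 := by positivity
  generalize (∏ j ∈ range k, (2 * j + 1 : ℚ)) = D at *
  generalize ((4 * n + 2 * k).factorial : ℚ) = a at *
  generalize ((2 * n + k).factorial : ℚ) = b at *
  generalize ((2 * n).factorial : ℚ) = c at *
  generalize (n.factorial : ℚ) = d at *
  generalize (n.descFactorial k : ℚ) = f at *
  push_cast
  rw [pow_succ (-1024 : ℚ), pow_succ (-1 : ℚ)]
  have h9 : (-1024 : ℚ) ^ n ≠ 0 := by positivity
  generalize (-1024 : ℚ) ^ n = e at *
  field_simp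
  ring

lemma wz_sum (N K : ℕ) :
    ∑ n ∈ range (N + 1), wzF n 0 =
      ∑ n ∈ range (N + 1), wzF n K + ∑ k ∈ range K, wzG (N + 1) k := by
  induction K with
  | zero => simp
  | succ K ih =>
    have h : ∑ n ∈ range (N + 1), (wzF n K - wzF n (K + 1)) = wzG (N + 1) K := by
      simp_rw [wz_identity, sum_range_sub (fun n => wzG n K)]
      simp [wzG]
    rw [sum_sub_distrib] at h
    rw [ih, sum_range_succ _ K]
    linarith

lemma wz_half_sum (N : ℕ) :
    ∑ n ∈ range (N + 1), wzF n 0 = wzF N N + ∑ k ∈ range N, wzG (N + 1) k := by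
  rw [wz_sum N N, sum_range_succ, sum_eq_zero, zero_add]
  intro n hn
  simp [wzF, Nat.descFactorial_eq_zero_iff_lt.2 (mem_range.1 hn)]

lemma two_mul_factorial (N : ℕ) :
    ((2 * N).factorial : ℚ) = (∏ j ∈ range N, (2 * j + 1 : ℚ)) * 2 ^ N * N.factorial := by
  induction N with
  | zero => simp
  | succ N ih =>
    rw [show 2 * (N + 1) = 2 * N + 1 + 1 by ring]
    simp only [Nat.factorial_succ, prod_range_succ, Nat.cast_mul, ih]
    push_cast; ring

lemma prod_one_add_div (a m : ℕ) :
    ∏ i ∈ range m, (1 + (a : ℚ) / (i + 1)) = (a + m).factorial / (a.factorial * m.factorial) := by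
  induction m with
  | zero => simp; rw [div_self]; positivity
  | succ m ih =>
    rw [prod_range_succ, ih, ← add_assoc]
    simp only [Nat.factorial_succ, Nat.cast_mul]
    push_cast
    field_simp
    ring

lemma prod_one_sub_div (N : ℕ) :
    ∏ i ∈ range N, (1 - (2 * N + 1 : ℚ) / (i + 1)) =
      (-1) ^ N * ((2 * N).factorial / (N.factorial : ℚ) ^ 2) := by
  have key : ∀ m a : ℕ, ∏ i ∈ range m, (1 - (a + m + 1 : ℚ) / (i + 1)) =
      (-1) ^ m * ((a + m).factorial / (a.factorial * m.factorial)) := by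
    intro m a
    have : ∀ i ∈ range m, (1 - (a + m + 1 : ℚ) / (i + 1)) =
        (-1) * ((a + m - i : ℚ) / (i + 1)) := by
      intro i _; field_simp; ring
    rw [prod_congr rfl this, prod_mul_distrib, prod_const, card_range, prod_div_distrib]
    congr 1
    have h1 : ∏ i ∈ range m, (i + 1 : ℚ) = m.factorial := by
      rw [← prod_range_add_one_eq_factorial]; push_cast; rfl
    have h2 : ∏ i ∈ range m, (a + m - i : ℚ) = (a + m).factorial / a.factorial := by
      rw [← prod_range_reflect]
      have : ∀ j ∈ range m, (a + m - (m - 1 - j : ℕ) : ℚ) = (1 + (a:ℚ) / (j + 1)) * (j + 1) := by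
        intro j hj
        have := mem_range.1 hj
        rw [show m - 1 - j = m - (j + 1) by omega, Nat.cast_sub (by omega)]
        push_cast; field_simp; ring
      rw [prod_congr rfl this, prod_mul_distrib, h1, prod_one_add_div]
      field_simp
    rw [h1, h2]; field_simp
  have := key N N
  rw [← two_mul, ← two_mul N, ← sq] at this
  exact this

lemma prod_odd_add (N : ℕ) :
    ∏ j ∈ range N, (1 + (2 * N + 1 : ℚ) / (2 * j + 1)) = 4 ^ N := by
  have h : ∀ j ∈ range N, (1 + (2 * N + 1 : ℚ) / (2 * j + 1)) =
      2 * ((1 + (N : ℚ) / (j + 1)) * (j + 1)) / (2 * j + 1) := by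
    intro j _; field_simp; ring
  have h1 : ∏ i ∈ range N, (i + 1 : ℚ) = N.factorial := by
    rw [← prod_range_add_one_eq_factorial]; push_cast; rfl
  rw [prod_congr rfl h, prod_div_distrib, prod_mul_distrib, prod_mul_distrib, h1,
    prod_one_add_div, prod_const, card_range, ← two_mul, two_mul_factorial]
  have := oddProd_ne_zero N
  field_simp
  rw [← pow_mul, mul_comm, pow_mul]; norm_num

lemma prod_odd_sub (N : ℕ) :
    (∏ j ∈ range N, (1 - (2 * N + 1 : ℚ) / (2 * j + 1))) *
      ((2 * N).factorial / (N.factorial : ℚ) ^ 2) = (-1) ^ N * 4 ^ N := by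
  have h : ∀ j ∈ range N, (1 - (2 * N + 1 : ℚ) / (2 * j + 1)) =
      (-2) * (N - j : ℚ) / (2 * j + 1) := by
    intro j _; field_simp; ring
  have h1 : ∏ i ∈ range N, (N - i : ℚ) = N.factorial := by
    rw [← prod_range_add_one_eq_factorial, ← prod_range_reflect]
    push_cast
    refine prod_congr rfl fun j hj => ?_
    have := mem_range.1 hj
    rw [show N - 1 - j = N - (j + 1) by omega, Nat.cast_sub (by omega)]
    push_cast; ring
  rw [prod_congr rfl h, prod_div_distrib, prod_mul_distrib, h1, prod_const, card_range,
    two_mul_factorial]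
  have := oddProd_ne_zero N
  field_simp
  rw [← mul_pow, ← mul_pow]; norm_num

/-- The exact telescoping sum that produces the Fermat quotient `(4^N - 1)/p`, `p = 2N + 1`. -/
lemma telescope (N : ℕ) :
    (2 * N + 1 : ℚ) * ∑ k ∈ range N, (1 / (2 * k + 1 : ℚ)) *
      ∏ j ∈ range k, (1 + (2 * N + 1 : ℚ) * (1 / (2 * j + 1))) = 4 ^ N - 1 := by
  have key : ∀ K, (2 * N + 1 : ℚ) * ∑ k ∈ range K, (1 / (2 * k + 1 : ℚ)) *
      ∏ j ∈ range k, (1 + (2 * N + 1 : ℚ) * (1 / (2 * j + 1))) =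
      ∏ j ∈ range K, (1 + (2 * N + 1 : ℚ) * (1 / (2 * j + 1))) - 1 := by
    intro K
    induction K with
    | zero => simp
    | succ K ih => rw [sum_range_succ, mul_add, ih, prod_range_succ]; ring
  rw [key, ← prod_odd_add]
  simp [div_eq_mul_inv]

lemma wzF_diag (N : ℕ) :
    wzF N N * 256 ^ N * (∏ i ∈ range N, (1 + (2 * N + 1 : ℚ) / (i + 1))) =
      3 * (2 * N + 1) * ((2 * N).factorial / (N.factorial : ℚ) ^ 2) *
      (∏ i ∈ range (2 * N), (1 + (2 * N + 1 : ℚ) / (i + 1))) *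
      ∏ i ∈ range (2 * N), (1 + 2 * (2 * N + 1 : ℚ) / (i + 1)) := by
  have a1 := prod_one_add_div (2 * N + 1) N
  have a2 := prod_one_add_div (2 * N + 1) (2 * N)
  have a3 := prod_one_add_div (2 * (2 * N + 1)) (2 * N)
  push_cast at a1 a2 a3
  rw [a1, a2, a3, wzF, two_mul_factorial N]
  rw [show 2 * N + 1 + N = 3 * N + 1 by ring, show 2 * N + 1 + 2 * N = 4 * N + 1 by ring,
    show 2 * (2 * N + 1) + 2 * N = 6 * N + 1 + 1 by ring, show 4 * N + 2 * N = 6 * N by ring,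
    show 2 * N + N = 3 * N by ring, show 2 * (2 * N + 1) = 4 * N + 1 + 1 by ring,
    Nat.descFactorial_self]
  simp only [Nat.factorial_succ, Nat.cast_mul, two_mul_factorial N]
  have := oddProd_ne_zero N
  have e : (-1024 : ℚ) ^ N = (-1) ^ N * 256 ^ N * 2 ^ N * 2 ^ N := by
    rw [← mul_pow, ← mul_pow, ← mul_pow]; norm_num
  rw [e]
  have h3 : ((4 * N).factorial : ℚ) ≠ 0 := by positivity
  push_cast
  field_simp
  ring

lemma wzG_eq (N k : ℕ) :
    wzG (N + 1) k = (-1) ^ N * (2 * N + 1) ^ 2 *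
      (∏ i ∈ range (2 * N), (1 + (2 * N + 1 : ℚ) / (i + 1))) *
      ((2 * N).factorial / (N.factorial : ℚ) ^ 2) ^ 2 / 1024 ^ N *
      ((1 / (2 * k + 1 : ℚ)) * (1 + 2 * (2 * N + 1 : ℚ) * (1 / (2 * k + 1))) *
       ∏ j ∈ range k, ((1 + 2 * (2 * N + 1 : ℚ) * (1 / (2 * j + 1))) *
         (1 - (2 * N + 1 : ℚ) * (1 / (2 * j + 1))))) := by
  induction k with
  | zero =>
    have a2 := prod_one_add_div (2 * N + 1) (2 * N)
    push_cast at a2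
    rw [a2, wzG]
    rw [show 4 * (N + 1) + 2 * 0 = 4 * N + 1 + 1 + 1 + 1 by ring,
      show 2 * (N + 1) + 0 = 2 * N + 1 + 1 by ring, show 2 * (N + 1) = 2 * N + 1 + 1 by ring,
      show 2 * N + 1 + 2 * N = 4 * N + 1 by ring]
    have e : (-1024 : ℚ) ^ N = (-1) ^ N * 1024 ^ N := by
      rw [← mul_pow]; norm_num
    have e' : ((-1 : ℚ) ^ N) ^ 2 = 1 := by rw [← pow_mul, mul_comm, pow_mul]; norm_num
    have e2 : ((-1 : ℚ) ^ N) ≠ 0 := by positivity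
    simp [Nat.factorial_succ, pow_succ (-1024 : ℚ), e]
    field_simp
    rw [e']
    ring
  | succ k ih =>
    have hr : wzG (N + 1) (k + 1) = wzG (N + 1) k *
        (-(2 * (4 * N + 5 + 2 * k) * (N - k)) / (2 * k + 3) ^ 2) := by
      unfold wzG
      rw [show 4 * (N + 1) + 2 * (k + 1) = 4 * (N + 1) + 2 * k + 1 + 1 by ring,
        show 2 * (N + 1) + (k + 1) = 2 * (N + 1) + k + 1 by ring,
        cast_descFactorial_succ (N + 1) (k + 1), prod_range_succ _ (k + 1)]
      simp only [Nat.factorial_succ, Nat.cast_mul]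
      have := oddProd_ne_zero (k + 1)
      push_cast
      have h5 : ((2 * k : ℚ) + 3) ≠ 0 := by positivity
      have h6 : ((2 * (k + 1) : ℚ) + 1) ≠ 0 := by positivity
      rw [pow_succ (-1 : ℚ) (k + 1)]
      field_simp
      ring
    rw [hr, ih, prod_range_succ]
    have h5 : ((2 * k : ℚ) + 3) ≠ 0 := by positivity
    have h6 : ((2 * (k + 1) : ℚ) + 1) ≠ 0 := by positivity
    have h7 : ((2 * k : ℚ) + 1) ≠ 0 := by positivity
    push_cast
    generalize (-1 : ℚ) ^ N * (2 * N + 1) ^ 2 *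
      (∏ i ∈ range (2 * N), (1 + (2 * N + 1 : ℚ) / (i + 1))) *
      ((2 * N).factorial / (N.factorial : ℚ) ^ 2) ^ 2 / 1024 ^ N = C
    generalize ∏ j ∈ range k, ((1 + 2 * (2 * N + 1 : ℚ) * (1 / (2 * j + 1))) *
         (1 - (2 * N + 1 : ℚ) * (1 / (2 * j + 1)))) = P
    field_simp
    ring

/-! ### Congruences among `p`-integral rationals -/

section PAdic

variable (p : ℕ) [hp : Fact p.Prime]

/-- The ring `ℤ_(p)` of `p`-integral rationals. -/
def pInt : Subring ℚ where
  carrier := {x | padicNorm p x ≤ 1}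
  mul_mem' {a b} ha hb := by
    simp only [Set.mem_ofPred_eq] at *
    rw [padicNorm.mul]
    exact mul_le_one₀ ha (padicNorm.nonneg _) hb
  one_mem' := by simp
  add_mem' {a b} ha hb := padicNorm.nonarchimedean.trans (max_le ha hb)
  zero_mem' := by simp
  neg_mem' {a} ha := by simpa using ha

variable {p}

lemma mem_pInt {x : ℚ} : x ∈ pInt p ↔ padicNorm p x ≤ 1 := Iff.rfl

lemma inv_mem_pInt {m : ℕ} (hm : ¬ p ∣ m) : (1 / (m : ℚ)) ∈ pInt p := by
  rw [mem_pInt, padicNorm.div, (padicNorm.nat_eq_one_iff m).2 hm]; simp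

lemma inv_one_add_mem_pInt {z : ℚ} (hz : z ∈ pInt p) :
    1 + p * z ≠ 0 ∧ 1 / (1 + p * z) ∈ pInt p := by
  have h1 : padicNorm p (p * z) < 1 := by
    rw [padicNorm.mul]
    exact (mul_le_of_le_one_right (padicNorm.nonneg _) hz).trans_lt
      padicNorm.padicNorm_p_lt_one_of_prime
  have h2 : padicNorm p (1 + p * z) = 1 := by
    rw [padicNorm.add_eq_max_of_ne (by rw [padicNorm.one]; exact h1.ne'), padicNorm.one]
    exact max_eq_left h1.le
  refine ⟨fun h0 => by simp [h0] at h2, ?_⟩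
  rw [mem_pInt, padicNorm.div, h2]; simp

lemma padicNorm_le_of_eq {m : ℕ} {x z : ℚ} (hz : z ∈ pInt p) (h : x = p ^ m * z) :
    padicNorm p x ≤ (p : ℚ) ^ (-m : ℤ) := by
  have e : padicNorm p ((p : ℚ) ^ m) = (p : ℚ) ^ (-m : ℤ) := by
    clear h
    induction m with
    | zero => simp
    | succ m ih =>
      rw [pow_succ, padicNorm.mul, ih, padicNorm.padicNorm_p_of_prime, zpow_neg, zpow_neg,
        zpow_natCast, zpow_natCast, pow_succ, mul_inv]
  rw [h, padicNorm.mul, e]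
  exact mul_le_of_le_one_right (by positivity) hz

lemma prod_add_mul (t : ℚ) (ht : t ∈ pInt p) (a b : ℕ → ℚ) (n : ℕ)
    (ha : ∀ i < n, a i ∈ pInt p) (hb : ∀ i < n, b i ∈ pInt p) :
    ∃ z ∈ pInt p, ∏ i ∈ range n, (a i + t * b i) = ∏ i ∈ range n, a i + t * z := by
  induction n with
  | zero => exact ⟨0, zero_mem _, by simp⟩
  | succ n ih =>
    obtain ⟨z, hz, h⟩ := ih (fun i hi => ha i (by omega)) (fun i hi => hb i (by omega))
    have h1 := ha n (by omega)
    have h2 := hb n (by omega)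
    have h3 : ∏ i ∈ range n, a i ∈ pInt p :=
      prod_mem fun i hi => ha i (by have := mem_range.1 hi; omega)
    refine ⟨(∏ i ∈ range n, a i) * b n + z * a n + t * (z * b n),
      add_mem (add_mem (mul_mem h3 h2) (mul_mem hz h1)) (mul_mem ht (mul_mem hz h2)), ?_⟩
    rw [prod_range_succ, prod_range_succ, h]; ring

lemma prod_one_add_mul (t : ℚ) (ht : t ∈ pInt p) (a : ℕ → ℚ) (n : ℕ)
    (ha : ∀ i < n, a i ∈ pInt p) :
    ∃ z ∈ pInt p, ∏ i ∈ range n, (1 + t * a i) = 1 + t * ∑ i ∈ range n, a i + t ^ 2 * z := by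
  induction n with
  | zero => exact ⟨0, zero_mem _, by simp⟩
  | succ n ih =>
    obtain ⟨z, hz, h⟩ := ih (fun i hi => ha i (by omega))
    have h1 := ha n (by omega)
    have h3 : ∑ i ∈ range n, a i ∈ pInt p :=
      sum_mem fun i hi => ha i (by have := mem_range.1 hi; omega)
    refine ⟨z + (∑ i ∈ range n, a i) * a n + t * (z * a n),
      add_mem (add_mem hz (mul_mem h3 h1)) (mul_mem ht (mul_mem hz h1)), ?_⟩
    rw [prod_range_succ, sum_range_succ, h]; ring

lemma natCast_mem_pInt (m : ℕ) : (m : ℚ) ∈ pInt p := natCast_mem _ m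

/-- If the `aᵢ` are `p`-integral and `∑ aᵢ ≡ 0 (mod p)`, then `∏ (1 + c p² aᵢ) ≡ 1 (mod p³)`. -/
lemma prod_cube (c : ℕ) (a : ℕ → ℚ) (n : ℕ) (ha : ∀ i < n, a i ∈ pInt p)
    (hs : ∃ z ∈ pInt p, ∑ i ∈ range n, a i = p * z) :
    ∃ z ∈ pInt p, ∏ i ∈ range n, (1 + c * p ^ 2 * a i) = 1 + p ^ 3 * z := by
  obtain ⟨y, hy, hs⟩ := hs
  have hp' := natCast_mem_pInt (p := p) p
  have hc := natCast_mem_pInt (p := p) c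
  obtain ⟨z, hz, h⟩ := prod_one_add_mul (p := p) (c * p ^ 2) (mul_mem hc (pow_mem hp' 2)) a n ha
  refine ⟨c * y + p * (c ^ 2 * z),
    add_mem (mul_mem hc hy) (mul_mem hp' (mul_mem (pow_mem hc 2) hz)), ?_⟩
  rw [h, hs]; ring

/-- A vanishing sum of inverse squares in `ZMod p` lifts to a congruence modulo `p` in `ℚ`: each
`1/f i` is congruent to the least nonnegative residue `g i` inverting `f i` modulo `p`. -/
lemma sum_inv_sq_lift (f : ℕ → ℕ) (n : ℕ) (hf : ∀ i < n, ¬ p ∣ f i)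
    (h : ∑ i ∈ range n, ((f i : ZMod p)⁻¹) ^ 2 = 0) :
    ∃ z ∈ pInt p, ∑ i ∈ range n, (1 / (f i : ℚ)) ^ 2 = p * z := by
  set g : ℕ → ℕ := fun i => ((f i : ZMod p)⁻¹).val with hg
  have h1 : p ∣ ∑ i ∈ range n, g i ^ 2 := by
    rw [← ZMod.natCast_eq_zero_iff]
    push_cast
    simpa [hg] using h
  obtain ⟨c, hc⟩ := h1
  have hex : ∀ i, ∃ r : ℚ, i < n → r ∈ pInt p ∧ 1 / (f i : ℚ) = g i + p * r := by
    intro i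
    by_cases hi : i < n
    · have h0 : (f i : ZMod p) ≠ 0 := by rw [Ne, ZMod.natCast_eq_zero_iff]; exact hf i hi
      have h2 : (p : ℤ) ∣ 1 - (f i : ℤ) * g i := by
        rw [← ZMod.intCast_zmod_eq_zero_iff_dvd]
        push_cast
        simp [hg, h0]
      obtain ⟨d, hd⟩ := h2
      have hq : (1 : ℚ) - f i * g i = p * d := by exact_mod_cast hd
      have hfi : (f i : ℚ) ≠ 0 := by
        intro h'
        exact hf i hi (by rw [Nat.cast_eq_zero.1 h']; exact dvd_zero _)
      refine ⟨d * (1 / f i), fun _ => ⟨mul_mem (intCast_mem _ d) (inv_mem_pInt (hf i hi)), ?_⟩⟩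
      field_simp
      linarith
    · exact ⟨0, fun h => absurd h hi⟩
  choose r hr using hex
  refine ⟨c + ∑ i ∈ range n, (2 * g i * r i + p * r i ^ 2), add_mem (natCast_mem _ c)
    (sum_mem fun i hi => ?_), ?_⟩
  · have := (hr i (mem_range.1 hi)).1
    exact add_mem (mul_mem (mul_mem (ofNat_mem _ 2) (natCast_mem _ _)) this)
      (mul_mem (natCast_mem _ _) (pow_mem this 2))
  · have hc' : ∑ i ∈ range n, (g i : ℚ) ^ 2 = p * c := by exact_mod_cast hc
    rw [mul_add, ← hc', mul_sum, ← sum_add_distrib]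
    refine sum_congr rfl fun i hi => ?_
    rw [(hr i (mem_range.1 hi)).2]; ring

variable {N : ℕ}

lemma zmod_sum_inv_sq (hN : p = 2 * N + 1) (hp3 : 3 < p) :
    ∑ i ∈ range N, (((i + 1 : ℕ) : ZMod p)⁻¹) ^ 2 = 0 := by
  have h1 : ∑ x : ZMod p, (x⁻¹) ^ 2 = 0 := by
    have h := FiniteField.sum_pow_lt_card_sub_one (K := ZMod p) 2 (by rw [ZMod.card]; omega)
    rw [← h]
    exact Function.Bijective.sum_comp inv_involutive.bijective (fun x : ZMod p => x ^ 2)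
  have h2 : ∑ x : ZMod p, (x⁻¹) ^ 2 = ∑ i ∈ range p, ((i : ZMod p)⁻¹) ^ 2 := by
    symm
    refine sum_bij' (fun i _ => (i : ZMod p)) (fun x _ => x.val) (by simp)
      (fun x _ => mem_range.2 (ZMod.val_lt x)) ?_ (by simp) (by simp)
    intro i hi
    exact ZMod.val_cast_of_lt (mem_range.1 hi)
  rw [h1] at h2
  rw [show range p = range (N + N + 1) by rw [hN, two_mul], sum_range_succ', sum_range_add,
    ← sum_range_reflect (fun x => (((N + x + 1 : ℕ) : ZMod p)⁻¹) ^ 2)] at h2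
  have h3 : ∀ j ∈ range N, (((N + (N - 1 - j) + 1 : ℕ) : ZMod p)⁻¹) ^ 2 =
      (((j + 1 : ℕ) : ZMod p)⁻¹) ^ 2 := by
    intro j hj
    have := mem_range.1 hj
    have e : ((N + (N - 1 - j) + 1 : ℕ) : ZMod p) = -((j + 1 : ℕ) : ZMod p) := by
      rw [eq_neg_iff_add_eq_zero, ← Nat.cast_add,
        show N + (N - 1 - j) + 1 + (j + 1) = p by omega]
      simp
    rw [e, inv_neg, neg_sq]
  rw [sum_congr rfl h3] at h2
  have h2' : (2 : ZMod p) * ∑ i ∈ range N, (((i + 1 : ℕ) : ZMod p)⁻¹) ^ 2 = 0 := by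
    rw [two_mul]; simpa using h2.symm
  refine (mul_eq_zero.1 h2').resolve_left ?_
  intro h
  have : ((2 : ℕ) : ZMod p) = 0 := by exact_mod_cast h
  rw [ZMod.natCast_eq_zero_iff] at this
  have := Nat.le_of_dvd (by norm_num) this
  omega

lemma zmod_sum_odd_inv_sq (hN : p = 2 * N + 1) (hp3 : 3 < p) :
    ∑ i ∈ range N, (((2 * i + 1 : ℕ) : ZMod p)⁻¹) ^ 2 = 0 := by
  have h := zmod_sum_inv_sq hN hp3
  rw [← sum_range_reflect]
  have h3 : ∀ j ∈ range N, (((2 * (N - 1 - j) + 1 : ℕ) : ZMod p)⁻¹) ^ 2 =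
      ((2 : ZMod p)⁻¹) ^ 2 * (((j + 1 : ℕ) : ZMod p)⁻¹) ^ 2 := by
    intro j hj
    have := mem_range.1 hj
    have e : ((2 * (N - 1 - j) + 1 : ℕ) : ZMod p) = -(2 * (j + 1 : ℕ) : ZMod p) := by
      rw [eq_neg_iff_add_eq_zero]
      have : ((2 * (N - 1 - j) + 1 + 2 * (j + 1) : ℕ) : ZMod p) = 0 := by
        rw [show 2 * (N - 1 - j) + 1 + 2 * (j + 1) = p by omega]; simp
      exact_mod_cast this
    rw [e, inv_neg, neg_sq, mul_inv, mul_pow]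
  rw [sum_congr rfl h3, ← mul_sum, h, mul_zero]

lemma harmonic_sq (hN : p = 2 * N + 1) (hp3 : 3 < p) :
    ∃ z ∈ pInt p, ∑ i ∈ range N, (1 / (i + 1 : ℚ)) ^ 2 = p * z := by
  simpa using sum_inv_sq_lift (fun i => i + 1) N
    (fun i hi => Nat.not_dvd_of_pos_of_lt (by omega) (by omega)) (zmod_sum_inv_sq hN hp3)

lemma odd_harmonic_sq (hN : p = 2 * N + 1) (hp3 : 3 < p) :
    ∃ z ∈ pInt p, ∑ i ∈ range N, (1 / (2 * i + 1 : ℚ)) ^ 2 = p * z := by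
  simpa using sum_inv_sq_lift (fun i => 2 * i + 1) N
    (fun i hi => Nat.not_dvd_of_pos_of_lt (by omega) (by omega)) (zmod_sum_odd_inv_sq hN hp3)

lemma inv_succ_mem (hN : p = 2 * N + 1) {i : ℕ} (hi : i < 2 * N) : 1 / (i + 1 : ℚ) ∈ pInt p := by
  simpa using inv_mem_pInt (p := p) (m := i + 1) (Nat.not_dvd_of_pos_of_lt (by omega) (by omega))

lemma inv_odd_mem (hN : p = 2 * N + 1) {i : ℕ} (hi : i < N) : 1 / (2 * i + 1 : ℚ) ∈ pInt p := by
  simpa using inv_mem_pInt (p := p) (m := 2 * i + 1) (Nat.not_dvd_of_pos_of_lt (by omega) (by omega))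

/-- A form of Wolstenholme's theorem, `C((a+1)p - 1, p - 1) ≡ 1 (mod p³)`. Pairing the factors of
index `i` and `p - i` gives `(i + ap)(p - i + ap) = i(p - i) + (a + a²)p²`. -/
lemma wolstenholme (hN : p = 2 * N + 1) (hp3 : 3 < p) (a : ℕ) :
    ∃ z ∈ pInt p, ∏ i ∈ range (2 * N), (1 + a * (2 * N + 1 : ℚ) / (i + 1)) = 1 + p ^ 3 * z := by
  have hpq : (p : ℚ) = 2 * N + 1 := by rw [hN]; push_cast; rfl
  have hpair : ∏ i ∈ range (2 * N), (1 + a * (2 * N + 1 : ℚ) / (i + 1)) =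
      ∏ i ∈ range N, (1 + ((a + a ^ 2 : ℕ) : ℚ) * p ^ 2 * (1 / (i + 1 : ℚ) * (1 / (2 * N - i)))) := by
    rw [two_mul N, prod_range_add,
      ← prod_range_reflect (fun x => (1 + a * (2 * N + 1 : ℚ) / ((N + x : ℕ) + 1))),
      ← prod_mul_distrib]
    refine prod_congr rfl fun i hi => ?_
    have := mem_range.1 hi
    rw [show N - 1 - i = N - (i + 1) by omega, Nat.cast_add, Nat.cast_sub (by omega)]
    have h1 : (2 * N - i : ℚ) ≠ 0 := by
      have : (i : ℚ) < N := by exact_mod_cast this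
      have : (0 : ℚ) ≤ i := by positivity
      apply ne_of_gt; linarith
    have h2 : (N + (N - ((i + 1 : ℕ) : ℚ)) + 1) = 2 * N - i := by push_cast; ring
    rw [h2, hpq]
    push_cast
    field_simp
    ring
  rw [hpair]
  have hmem : ∀ i < N, 1 / (2 * N - i : ℚ) ∈ pInt p := by
    intro i hi
    have := inv_mem_pInt (p := p) (m := 2 * N - i) (Nat.not_dvd_of_pos_of_lt (by omega) (by omega))
    rw [Nat.cast_sub (by omega)] at this
    simpa using this
  have hmem' : ∀ i < N, 1 / (i + 1 : ℚ) ∈ pInt p := fun i hi => inv_succ_mem hN (by omega)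
  refine prod_cube _ _ _ (fun i hi => mul_mem (hmem' i hi) (hmem i hi)) ?_
  obtain ⟨y, hy, h⟩ := harmonic_sq hN hp3
  -- With `m = i + 1` and `p - m = 2N - i`: `1/(m(p-m)) = p/(m²(p-m)) - 1/m²`.
  refine ⟨∑ i ∈ range N, (1 / (i + 1 : ℚ)) ^ 2 * (1 / (2 * N - i : ℚ)) - y,
    sub_mem (sum_mem fun i hi => mul_mem (pow_mem (hmem' i (mem_range.1 hi)) 2)
      (hmem i (mem_range.1 hi))) hy, ?_⟩
  rw [mul_sub, ← h, mul_sum, ← sum_sub_distrib]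
  refine sum_congr rfl fun i hi => ?_
  have h1 : (2 * N - i : ℚ) ≠ 0 := by
    have : (i : ℚ) < N := by exact_mod_cast mem_range.1 hi
    have : (0 : ℚ) ≤ i := by positivity
    apply ne_of_gt; linarith
  rw [hpq]
  field_simp
  ring

lemma prod_one_sub_sq (x : ℕ → ℚ) (hx : ∀ i < N, x i ∈ pInt p)
    (hs : ∃ z ∈ pInt p, ∑ i ∈ range N, x i ^ 2 = p * z) :
    ∃ z ∈ pInt p, (∏ i ∈ range N, (1 + p * x i)) * ∏ i ∈ range N, (1 - p * x i) =
      1 + p ^ 3 * z := by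
  obtain ⟨y, hy, hs⟩ := hs
  obtain ⟨z, hz, h⟩ := prod_cube (p := p) 1 (fun i => -x i ^ 2) N
    (fun i hi => neg_mem (pow_mem (hx i hi) 2)) ⟨-y, neg_mem hy, by
      rw [sum_neg_distrib, hs]; ring⟩
  refine ⟨z, hz, ?_⟩
  rw [← h, ← prod_mul_distrib]
  refine prod_congr rfl fun i _ => by push_cast; ring

/-- The square of Morley's congruence `C(p-1, (p-1)/2) ≡ (-1)^((p-1)/2) 4^(p-1) (mod p³)`. -/
lemma morley_sq (hN : p = 2 * N + 1) (hp3 : 3 < p) :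
    ∃ z ∈ pInt p, (((2 * N).factorial : ℚ) / (N.factorial : ℚ) ^ 2) ^ 2 = 256 ^ N + p ^ 3 * z := by
  have hpq : (p : ℚ) = 2 * N + 1 := by rw [hN]; push_cast; rfl
  obtain ⟨z, hz, h⟩ := prod_one_sub_sq (fun i => 1 / (2 * i + 1 : ℚ))
    (fun i hi => inv_odd_mem hN hi) (odd_harmonic_sq hN hp3)
  have h1 := prod_odd_add N
  have h2 := prod_odd_sub N
  simp only [mul_one_div, hpq] at h
  rw [h1] at h
  have hu : ((2 * N).factorial : ℚ) / (N.factorial : ℚ) ^ 2 ∈ pInt p := by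
    have : ((2 * N).factorial : ℚ) / (N.factorial : ℚ) ^ 2 = ((2 * N).choose N : ℕ) := by
      rw [Nat.cast_choose ℚ (by omega), show 2 * N - N = N by omega, sq]
    rw [this]; exact natCast_mem _ _
  generalize ((2 * N).factorial : ℚ) / (N.factorial : ℚ) ^ 2 = u at *
  generalize (∏ j ∈ range N, (1 - (2 * N + 1 : ℚ) / (2 * j + 1))) = M at *
  have e1 : u = (-1) ^ N * 16 ^ N - p ^ 3 * (z * u) := by
    have e16 : (16 : ℚ) ^ N = 4 ^ N * 4 ^ N := by rw [← mul_pow]; norm_num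
    rw [e16, ← mul_assoc, ← h2, hpq]
    linear_combination (-u) * h
  have e256 : ((-1 : ℚ) ^ N * 16 ^ N) ^ 2 = 256 ^ N := by
    rw [← mul_pow, ← pow_mul, mul_comm N 2, pow_mul]; norm_num
  have hm : ((-1 : ℚ) ^ N * 16 ^ N) ∈ pInt p :=
    mul_mem (pow_mem (neg_mem (one_mem _)) N) (pow_mem (ofNat_mem _ 16) N)
  refine ⟨-(z * u) * (u + (-1) ^ N * 16 ^ N), mul_mem (neg_mem (mul_mem hz hu)) (add_mem hu hm), ?_⟩
  rw [← e256]
  linear_combination (u + (-1) ^ N * 16 ^ N) * e1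

lemma inv_pow_mem (hN : p = 2 * N + 1) (m : ℕ) : 1 / ((2 : ℚ) ^ m) ∈ pInt p := by
  have h2 : (1 / ((2 : ℕ) : ℚ)) ∈ pInt p := inv_mem_pInt (by
    intro h
    have h1 := hp.out.two_le
    have := Nat.le_of_dvd (by norm_num) h
    omega)
  rw [← one_div_pow]
  exact pow_mem (by simpa using h2) m

lemma wzF_diag_cong (hN : p = 2 * N + 1) (hp3 : 3 < p) :
    ∃ z ∈ pInt p, wzF N N = 3 * p * (-1) ^ N + p ^ 4 * z := by
  have hpq : (p : ℚ) = 2 * N + 1 := by rw [hN]; push_cast; rfl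
  have hpm := natCast_mem_pInt (p := p) p
  have hF := wzF_diag N
  obtain ⟨w₁, hw₁, e₁⟩ := wolstenholme hN hp3 1
  obtain ⟨w₂, hw₂, e₂⟩ := wolstenholme hN hp3 2
  obtain ⟨y, hy, e₃⟩ := morley_sq hN hp3
  obtain ⟨z, hz, e₄⟩ := prod_one_sub_sq (fun i => 1 / (i + 1 : ℚ))
    (fun i hi => inv_succ_mem hN (by omega)) (harmonic_sq hN hp3)
  simp only [mul_one_div] at e₄
  rw [hpq, prod_one_sub_div, ← hpq] at e₄
  push_cast at e₁ e₂
  rw [one_mul] at e₁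
  rw [e₁, e₂, ← hpq] at hF
  generalize ((2 * N).factorial : ℚ) / (N.factorial : ℚ) ^ 2 = u at *
  generalize (∏ i ∈ range N, (1 + (p : ℚ) / (i + 1))) = V at *
  have h256 : (1 / (256 : ℚ) ^ N) ∈ pInt p := by
    have := inv_pow_mem hN (8 * N)
    rw [pow_mul] at this; norm_num at this ⊢; exact this
  obtain ⟨hne, hb⟩ :=
    inv_one_add_mem_pInt (p := p) (z := p ^ 2 * z) (mul_mem (pow_mem hpm 2) hz)
  set b := 1 / (1 + p * (p ^ 2 * z)) with hbdef
  set c := 1 / (256 : ℚ) ^ N with hc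
  have hc1 : c * 256 ^ N = 1 := by rw [hc]; field_simp
  have hb1 : b * (1 + p * (p ^ 2 * z)) = 1 := by rw [hbdef, one_div_mul_cancel hne]
  have hm : ((-1 : ℚ) ^ N) ∈ pInt p := pow_mem (neg_mem (one_mem _)) N
  have key : wzF N N = 3 * p * (-1) ^ N * (1 + p ^ 3 * (c * y)) * (1 + p ^ 3 * w₁) *
      (1 + p ^ 3 * w₂) * (1 - p ^ 3 * (z * b)) := by
    have hb2 : 1 - p ^ 3 * (z * b) = b := by linear_combination -hb1
    have e5 : wzF N N * 256 ^ N * (1 + p ^ 3 * z) =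
        3 * p * (-1) ^ N * (256 ^ N + p ^ 3 * y) * (1 + p ^ 3 * w₁) * (1 + p ^ 3 * w₂) := by
      rw [← e₃, ← e₄]
      linear_combination ((-1) ^ N * u) * hF
    have e6 : 1 + p ^ 3 * (c * y) = c * (256 ^ N + p ^ 3 * y) := by linear_combination -hc1
    rw [hb2, e6]
    linear_combination (c * b) * e5 - wzF N N * (1 + p ^ 3 * z) * b * hc1 - wzF N N * hb1
  have mulc : ∀ s t : ℚ, s ∈ pInt p → t ∈ pInt p →
      ∃ r ∈ pInt p, (1 + p ^ 3 * s) * (1 + p ^ 3 * t) = 1 + p ^ 3 * r := fun s t hs ht =>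
    ⟨s + t + p ^ 3 * (s * t),
      add_mem (add_mem hs ht) (mul_mem (pow_mem hpm 3) (mul_mem hs ht)), by ring⟩
  obtain ⟨r₁, hr₁, f₁⟩ := mulc _ _ (mul_mem h256 hy) hw₁
  obtain ⟨r₂, hr₂, f₂⟩ := mulc _ _ hr₁ hw₂
  obtain ⟨r₃, hr₃, f₃⟩ := mulc _ _ hr₂ (neg_mem (mul_mem hz hb))
  refine ⟨3 * (-1) ^ N * r₃, mul_mem (mul_mem (ofNat_mem _ 3) hm) hr₃, ?_⟩
  rw [key]
  linear_combination (3 * p * (-1) ^ N * (1 + p ^ 3 * w₂) * (1 - p ^ 3 * (z * b))) * f₁ +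
    (3 * p * (-1) ^ N * (1 - p ^ 3 * (z * b))) * f₂ + (3 * p * (-1) ^ N) * f₃

/-- Up to its constant factor, `∑ G(N+1,k)` is congruent modulo `p²` to the Fermat quotient
`q = (4^N - 1)/p = (2^(p-1) - 1)/p`. -/
lemma sum_cong (hN : p = 2 * N + 1) (hp3 : 3 < p) :
    ∃ q ∈ pInt p, ∃ z ∈ pInt p, p * q = 4 ^ N - 1 ∧
      ∑ k ∈ range N, ((1 / (2 * k + 1 : ℚ)) * (1 + 2 * (2 * N + 1 : ℚ) * (1 / (2 * k + 1))) *
       ∏ j ∈ range k, ((1 + 2 * (2 * N + 1 : ℚ) * (1 / (2 * j + 1))) *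
         (1 - (2 * N + 1 : ℚ) * (1 / (2 * j + 1))))) = q + p ^ 2 * z := by
  have hpq : (p : ℚ) = 2 * N + 1 := by rw [hN]; push_cast; rfl
  have hpm := natCast_mem_pInt (p := p) p
  have htel := telescope N
  simp only [← hpq] at htel ⊢
  obtain ⟨y, hy, hs⟩ := odd_harmonic_sq hN hp3
  set x : ℕ → ℚ := fun k => 1 / (2 * k + 1 : ℚ) with hxdef
  have hx : ∀ i < N, x i ∈ pInt p := fun i hi => inv_odd_mem hN hi
  change ∑ i ∈ range N, x i ^ 2 = p * y at hs
  change p * ∑ k ∈ range N, x k * ∏ j ∈ range k, (1 + p * x j) = 4 ^ N - 1 at htel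
  change ∃ q ∈ pInt p, ∃ z ∈ pInt p, p * q = 4 ^ N - 1 ∧
      ∑ k ∈ range N, (x k * (1 + 2 * p * x k) *
       ∏ j ∈ range k, ((1 + 2 * p * x j) * (1 - p * x j))) = q + p ^ 2 * z
  have hP : ∀ k < N, ∀ j < k, 1 + p * x j ∈ pInt p := fun k hk j hj =>
    add_mem (one_mem _) (mul_mem hpm (hx j (by omega)))
  have hterm : ∀ k, ∃ r : ℚ, k < N → r ∈ pInt p ∧ x k * (1 + 2 * p * x k) *
       ∏ j ∈ range k, ((1 + 2 * p * x j) * (1 - p * x j)) =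
       x k * ∏ j ∈ range k, (1 + p * x j) + 2 * p * x k ^ 2 + p ^ 2 * r := by
    intro k
    by_cases hk : k < N
    swap
    · exact ⟨0, fun h => absurd h hk⟩
    obtain ⟨s, hs, e⟩ := prod_add_mul (p := p) (p ^ 2) (pow_mem hpm 2) (fun j => 1 + p * x j)
      (fun j => -2 * x j ^ 2) k (hP k hk)
      (fun j hj => mul_mem (neg_mem (ofNat_mem _ 2)) (pow_mem (hx j (by omega)) 2))
    obtain ⟨t, ht, e'⟩ := prod_add_mul (p := p) p hpm (fun _ => 1) x k
      (fun _ _ => one_mem _) (fun j hj => hx j (by omega))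
    simp only [prod_const_one] at e'
    have e2 : ∏ j ∈ range k, ((1 + 2 * p * x j) * (1 - p * x j)) =
        ∏ j ∈ range k, (1 + p * x j) + p ^ 2 * s := by
      rw [← e]; refine prod_congr rfl fun j _ => by ring
    have hxk := hx k hk
    refine ⟨x k * s * (1 + 2 * p * x k) + 2 * x k ^ 2 * t, fun _ => ⟨?_, ?_⟩⟩
    · exact add_mem (mul_mem (mul_mem hxk hs) (add_mem (one_mem _)
        (mul_mem (mul_mem (ofNat_mem _ 2) hpm) hxk)))
        (mul_mem (mul_mem (ofNat_mem _ 2) (pow_mem hxk 2)) ht)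
    · rw [e2]
      linear_combination (2 * p * x k ^ 2) * e'
  choose r hr using hterm
  refine ⟨∑ k ∈ range N, x k * ∏ j ∈ range k, (1 + p * x j), ?_,
    2 * y + ∑ k ∈ range N, r k, ?_, htel, ?_⟩
  · exact sum_mem fun k hk => mul_mem (hx k (mem_range.1 hk))
      (prod_mem fun j hj => hP k (mem_range.1 hk) j (mem_range.1 hj))
  · exact add_mem (mul_mem (ofNat_mem _ 2) hy) (sum_mem fun k hk => (hr k (mem_range.1 hk)).1)
  · rw [sum_congr rfl fun k hk => (hr k (mem_range.1 hk)).2, sum_add_distrib, sum_add_distrib,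
      ← mul_sum, ← mul_sum, hs]
    ring

lemma wzG_sum_cong (hN : p = 2 * N + 1) (hp3 : 3 < p) :
    ∃ z ∈ pInt p, ∑ k ∈ range N, wzG (N + 1) k =
      (-1) ^ N * p * ((4 ^ N - 1) - (4 ^ N - 1) ^ 2) + p ^ 4 * z := by
  have hpq : (p : ℚ) = 2 * N + 1 := by rw [hN]; push_cast; rfl
  have hpm := natCast_mem_pInt (p := p) p
  obtain ⟨w, hw, e₁⟩ := wolstenholme hN hp3 1
  obtain ⟨y, hy, e₂⟩ := morley_sq hN hp3
  obtain ⟨q, hq, z, hz, e₃, e₄⟩ := sum_cong hN hp3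
  push_cast at e₁
  rw [one_mul] at e₁
  rw [sum_congr rfl fun k _ => wzG_eq N k, ← mul_sum, e₄, e₁, e₂, ← hpq, ← e₃]
  have hm : ((-1 : ℚ) ^ N) ∈ pInt p := pow_mem (neg_mem (one_mem _)) N
  have h256 : (1 / (256 : ℚ) ^ N) ∈ pInt p := by
    have := inv_pow_mem hN (8 * N)
    rw [pow_mul] at this; norm_num at this ⊢; exact this
  have h4 : (1 / (4 : ℚ) ^ N) ∈ pInt p := by
    have := inv_pow_mem hN (2 * N)
    rw [pow_mul] at this; norm_num at this ⊢; exact this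
  have h1024 : (1024 : ℚ) ^ N = 256 ^ N * 4 ^ N := by rw [← mul_pow]; norm_num
  set c := 1 / (256 : ℚ) ^ N with hc
  set e := 1 / (4 : ℚ) ^ N with he
  have hc1 : c * 256 ^ N = 1 := by rw [hc]; field_simp
  have he1 : e * 4 ^ N = 1 := by rw [he]; field_simp
  -- `e` is the inverse of `4 ^ N = 1 + p * q`.
  have he2 : e = 1 - p * q + p ^ 2 * (q ^ 2 * e) := by
    have : (4 : ℚ) ^ N = 1 + p * q := by linarith
    rw [this] at he1
    linear_combination (1 - p * q) * he1
  obtain ⟨s, hs, hs'⟩ : ∃ s ∈ pInt p,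
      (1 + p ^ 3 * w) * (256 ^ N + p ^ 3 * y) / 1024 ^ N = e + p ^ 2 * s := by
    refine ⟨p * (e * (w + c * y + p ^ 3 * (w * (c * y)))), mul_mem hpm (mul_mem h4
      (add_mem (add_mem hw (mul_mem h256 hy))
        (mul_mem (pow_mem hpm 3) (mul_mem hw (mul_mem h256 hy))))), ?_⟩
    rw [h1024, hc, he]
    field_simp
    ring
  refine ⟨(-1) ^ N * (q * (q ^ 2 * e + s) + z * (e + p ^ 2 * s)), mul_mem hm
    (add_mem (mul_mem hq (add_mem (mul_mem (pow_mem hq 2) h4) hs))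
      (mul_mem hz (add_mem h4 (mul_mem (pow_mem hpm 2) hs)))), ?_⟩
  have : (-1) ^ N * (p : ℚ) ^ 2 * (1 + p ^ 3 * w) * (256 ^ N + p ^ 3 * y) / 1024 ^ N =
      (-1) ^ N * p ^ 2 * (e + p ^ 2 * s) := by
    rw [← hs']; ring
  rw [this]
  linear_combination ((-1) ^ N * p ^ 2 * q) * he2

end PAdic

end

/-- For a prime `p > 3`,
`∑_{k=0}^{(p-1)/2} (20k+3)/(-2^10)^k · (4k)!/(k!)^4
  ≡ (-1)^((p-1)/2) · p · (2^(p-1) + 2 - (2^(p-1)-1)^2) (mod p^4)`. -/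
theorem sun_half_sum_20k3 (p : ℕ) (hp : p.Prime) (hp3 : 3 < p) :
    padicNorm p ((∑ k ∈ Finset.range ((p - 1) / 2 + 1),
        (20 * k + 3 : ℚ) / (-2 ^ 10 : ℚ) ^ k *
          ((Nat.factorial (4 * k) : ℚ) / (Nat.factorial k : ℚ) ^ 4)) -
      (-1) ^ ((p - 1) / 2) * (p : ℚ) *
        ((2 : ℚ) ^ (p - 1) + 2 - ((2 : ℚ) ^ (p - 1) - 1) ^ 2)) ≤ (p : ℚ) ^ (-4 : ℤ) := by
  have := Fact.mk hp
  obtain ⟨N, hN⟩ : ∃ N, p = 2 * N + 1 := (hp.odd_of_ne_two (by omega))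
  have hN' : (p - 1) / 2 = N := by omega
  have hp1 : (2 : ℚ) ^ (p - 1) = 4 ^ N := by
    rw [show p - 1 = 2 * N by omega, pow_mul]; norm_num
  rw [hN', hp1]
  have hsum : ∑ k ∈ Finset.range (N + 1), (20 * k + 3 : ℚ) / (-2 ^ 10 : ℚ) ^ k *
      ((Nat.factorial (4 * k) : ℚ) / (Nat.factorial k : ℚ) ^ 4) =
      ∑ n ∈ Finset.range (N + 1), wzF n 0 := by
    refine Finset.sum_congr rfl fun n _ => ?_
    have h := Nat.factorial_pos (2 * n)
    rw [show (-2 ^ 10 : ℚ) = -1024 by norm_num]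
    simp [wzF]
    field_simp
  obtain ⟨z₁, h₁, e₁⟩ := wzF_diag_cong hN hp3
  obtain ⟨z₂, h₂, e₂⟩ := wzG_sum_cong hN hp3
  rw [hsum, wz_half_sum, e₁, e₂]
  refine padicNorm_le_of_eq (m := 4) (add_mem h₁ h₂) ?_
  ring
end

section
/- Let p be an odd prime. Then ∑_{k=0}^{p-1} (20k+3)/(-2^10)^k · (4k)!/(k!)^4 ≡ 3·(-1)^((p-1)/2)·p + 3·p^3·E_{p-3} (mod p^4), as a congruence of rational numbers (the p-adic valuation of the difference is at least 4). -/
/-!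
The sum is transformed by a WZ pair: with `F = FF` and `G(·, j+1) = GG · j`, the relation
`F(n,j) - F(n,j+1) = G(n+1,j+1) - G(n,j+1)` gives (`wz_sum`)
`∑_{n<p} F(n,0) = ∑_{j<p} G(p,j+1)`. Write `p = 2m+1` with `p ≥ 5`, and split the new sum at `j = m`.

For `j = m + i`, grouping the factors of the rising factorials into blocks between multiples of
`p/2` shows (`GG_upper`) that the sum over `0 ≤ i ≤ m` is
`3 p (-1)^m · 4^(-4m) · P(1/2) · W(1/2) · W(3/2) · S`, with `P(c) = ∏_{i ≤ m} (1 + c p / i)` and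
`W(c) = ∏_{i ≤ p-1} (1 + c p / i)`. By Wolstenholme's congruences `W(c) ≡ 1 (mod p³)` and
`P(c) ≡ exp (c p H_m) (mod p³)`; moreover `4^m = P(-1) / P(-1/2)` exactly, and
`S ≡ P(-3/2) / P(1) (mod p³)` by the Chu–Vandermonde identity. The exponents
`-4 (-1 + 1/2) + 1/2 - 3/2 - 1` add up to `0`, so this part is `3 p (-1)^m` modulo `p⁴`
(`upper_cg`).

For `j < m` the term `G(p,j+1)` is divisible by `p³`, and only a congruence modulo `p` is needed
after dividing by it. The sum becomes one of reciprocal binomial coefficients with the closed form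
`cc_eq` in terms of `∑ (-1)^j/j²` and `∑ 1/j²` over `1 ≤ j ≤ m`. The second vanishes modulo `p`; the
first is `2 (-1)^m E_{p-3}` modulo `p`, by Fermat and the functional equation of the Euler
polynomials (`euler_cg`). This part is therefore `3 p³ E_{p-3}` modulo `p⁴` (`lower_cg`).

The case `p = 3` is a computation.
-/

namespace Sun
open Finset

/-! ### Rising factorials -/

/-- The rising factorial `(x)_n = x (x + 1) ⋯ (x + n - 1)`. -/
def poch (x : ℚ) (n : ℕ) : ℚ := ∏ i ∈ range n, (x + i)

lemma poch_zero (x : ℚ) : poch x 0 = 1 := by simp [poch]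

lemma poch_succ (x : ℚ) (n : ℕ) : poch x (n + 1) = poch x n * (x + n) := by
  simp [poch, prod_range_succ]

lemma poch_add (x : ℚ) (a b : ℕ) : poch x (a + b) = poch x a * poch (x + a) b := by
  simp only [poch, prod_range_add]
  congr 1
  refine prod_congr rfl fun i _ => ?_
  push_cast; ring

lemma poch_succ' (x : ℚ) (n : ℕ) : poch x (n + 1) = x * poch (x + 1) n := by
  rw [add_comm, poch_add]; simp [poch]

lemma poch_pos {x : ℚ} (hx : 0 < x) (n : ℕ) : 0 < poch x n :=
  prod_pos fun i _ => by positivity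

lemma poch_one (n : ℕ) : poch 1 n = n.factorial := by
  induction n with
  | zero => simp [poch]
  | succ n ih => rw [poch_succ, ih, Nat.factorial_succ]; push_cast; ring

lemma poch_half (n : ℕ) : poch (1 / 2) n * (4 ^ n * n.factorial) = (2 * n).factorial := by
  induction n with
  | zero => simp [poch]
  | succ n ih =>
    rw [poch_succ, show 2 * (n + 1) = (2 * n + 1) + 1 by ring, Nat.factorial_succ,
      Nat.factorial_succ, Nat.factorial_succ]
    push_cast
    rw [← ih]; ring

/-! ### The WZ pair -/

/-- The WZ function
`F(n,k) = (-1)^(n+k) 16^(-n) (20n-2k+3) (1/2)_n (1/2)_(2n+k) / (n!² (n-k)! (1/2)_k²)`,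
meaningful for `k ≤ n`; at `k = 0` it is the summand of the theorem. -/
def FF (n k : ℕ) : ℚ :=
  (-1) ^ (n + k) / 16 ^ n * (20 * n - 2 * k + 3) * poch (1 / 2) n * poch (1 / 2) (2 * n + k) /
    ((n.factorial : ℚ) ^ 2 * (n - k).factorial * poch (1 / 2) k ^ 2)

/-- The WZ mate `G(n, j+1)` of `FF`, meaningful for `j < n`. Shifting the second index keeps it a
natural number, and the shifted function is only needed there. -/
def GG (n j : ℕ) : ℚ :=
  32 * ((-1) ^ (n + j + 1) / 16 ^ n) * n ^ 2 * poch (1 / 2) n * poch (1 / 2) (2 * n + j) /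
    ((n.factorial : ℚ) ^ 2 * (n - (j + 1)).factorial * poch (1 / 2) (j + 1) ^ 2)

lemma FF_zero (n : ℕ) : FF n 0 =
    (20 * n + 3 : ℚ) / (-2 ^ 10 : ℚ) ^ n *
      ((Nat.factorial (4 * n) : ℚ) / (Nat.factorial n : ℚ) ^ 4) := by
  have h1 := poch_half n
  have h2 := poch_half (2 * n)
  rw [show 2 * (2 * n) = 4 * n by ring] at h2
  have hn : (n.factorial : ℚ) ≠ 0 := by positivity
  have h4 : (4 : ℚ) ^ (2 * n) = 16 ^ n := by rw [pow_mul]; norm_num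
  have e1 : ((-2 ^ 10 : ℚ)) ^ n = (-1) ^ n * 16 ^ n * 4 ^ n * 16 ^ n := by
    rw [← mul_pow, ← mul_pow, ← mul_pow]; norm_num
  rw [h4] at h2
  have hs : ((-1 : ℚ) ^ n) * (-1) ^ n = 1 := by rw [← mul_pow]; norm_num
  rw [← h2, ← h1, e1]
  simp only [FF, poch_zero, Nat.sub_zero, add_zero]
  have hs' : ((-1 : ℚ) ^ n) ≠ 0 := by positivity
  push_cast
  field_simp
  linear_combination (20 * (n : ℚ) + 3) * poch (1 / 2) n * poch (1 / 2) (2 * n) * hs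

/-- The WZ relation `F(n,j) - F(n,j+1) = G(n+1,j+1) - G(n,j+1)` for `n > j`, with `n = j + 1 + d`. -/
lemma wz_step (j d : ℕ) :
    FF (j + 1 + d) j - FF (j + 1 + d) (j + 1) = GG (j + 1 + d + 1) j - GG (j + 1 + d) j := by
  have hp := (poch_pos (show (0 : ℚ) < 1 / 2 by norm_num) j).ne'
  have hd : (d.factorial : ℚ) ≠ 0 := by positivity
  set n := j + 1 + d with hn
  have hnq : (n : ℚ) = j + 1 + d := by rw [hn]; push_cast; ring
  have hnf : (n.factorial : ℚ) ≠ 0 := by positivity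
  unfold FF GG
  rw [show n - j = d + 1 by omega, show n - (j + 1) = d by omega,
    show n + 1 - (j + 1) = d + 1 by omega, show 2 * n + (j + 1) = 2 * n + j + 1 by ring,
    show 2 * (n + 1) + j = 2 * n + j + 1 + 1 by ring]
  simp only [poch_succ, Nat.factorial_succ]
  have h1 : (1 / 2 + j : ℚ) ≠ 0 := by positivity
  have h2 : (d + 1 : ℚ) ≠ 0 := by positivity
  have h3 : (n + 1 : ℚ) ≠ 0 := by positivity
  push_cast
  generalize poch (1 / 2) n = A
  generalize poch (1 / 2) (2 * n + j) = B
  generalize poch (1 / 2) j = C at *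
  generalize (n.factorial : ℚ) = N at *
  generalize (d.factorial : ℚ) = D at *
  simp only [pow_succ, pow_add, pow_zero]
  have h5 : (j * 2 + 1 : ℚ) ≠ 0 := by positivity
  have h6 : (1 + 2 * j : ℚ) ≠ 0 := by positivity
  generalize (-1 : ℚ) ^ n = s
  generalize (-1 : ℚ) ^ j = t
  rw [hnq] at *
  field_simp
  ring

/-- The WZ relation at `n = j`, where `F(n,n+1)` and `G(n,n+1)` vanish by convention. -/
lemma wz_edge (n : ℕ) : FF n n = GG (n + 1) n := by
  have hp := (poch_pos (show (0 : ℚ) < 1 / 2 by norm_num) n).ne'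
  have hnf : (n.factorial : ℚ) ≠ 0 := by positivity
  unfold FF GG
  rw [Nat.sub_self, Nat.sub_self, show 2 * (n + 1) + n = 2 * n + n + 1 + 1 by ring, poch_succ,
    poch_succ, poch_succ, Nat.factorial_succ]
  have h1 : (1 / 2 + n : ℚ) ≠ 0 := by positivity
  have h3 : (n + 1 : ℚ) ≠ 0 := by positivity
  have h6 : (1 + 2 * n : ℚ) ≠ 0 := by positivity
  push_cast
  generalize poch (1 / 2) n = A at *
  generalize poch (1 / 2) (2 * n + n) = B
  generalize (n.factorial : ℚ) = N at *
  simp only [pow_succ, pow_add, pow_zero]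
  generalize (-1 : ℚ) ^ n = s
  field_simp
  ring

/-- Summing the WZ relation over the triangle `j ≤ n < N` trades the sum over `n` at `k = 0` for a
sum over the boundary `n = N`. -/
theorem wz_sum (N : ℕ) : ∑ n ∈ range N, FF n 0 = ∑ j ∈ range N, GG N j := by
  induction N with
  | zero => simp
  | succ N ih =>
    rw [sum_range_succ, ih, sum_range_succ (fun j => GG (N + 1) j), ← wz_edge]
    have : ∑ j ∈ range N, (FF N j - FF N (j + 1)) = ∑ j ∈ range N, (GG (N + 1) j - GG N j) := by
      refine sum_congr rfl fun j hj => ?_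
      obtain ⟨d, rfl⟩ := Nat.exists_eq_add_of_le (Nat.succ_le_of_lt (mem_range.1 hj))
      exact wz_step j d
    rw [sum_range_sub', sum_sub_distrib] at this
    linarith

/-! ### Two finite hypergeometric identities -/

/-- The Chu–Vandermonde identity, by Pascal's rule. -/
lemma chu_vandermonde (m : ℕ) : ∀ a c : ℚ, 0 < c →
    ∑ i ∈ range (m + 1), (-1) ^ i * (m.choose i : ℚ) * (poch a i / poch c i) =
      poch (c - a) m / poch c m := by
  induction m with
  | zero => intro a c _; simp [poch]
  | succ m ih =>
    intro a c hc
    have h1 := ih a c hc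
    have h2 := ih (a + 1) (c + 1) (by linarith)
    have key : ∑ i ∈ range (m + 1 + 1), (-1) ^ i * ((m + 1).choose i : ℚ) * (poch a i / poch c i)
        = ∑ i ∈ range (m + 1), (-1) ^ i * (m.choose i : ℚ) * (poch a i / poch c i)
          - a / c * ∑ i ∈ range (m + 1),
            (-1) ^ i * (m.choose i : ℚ) * (poch (a + 1) i / poch (c + 1) i) := by
      rw [sum_range_succ', mul_sum, sum_range_succ' (fun i => (-1) ^ i * (m.choose i : ℚ) *
        (poch a i / poch c i)) m]
      have : ∑ i ∈ range m, (-1 : ℚ) ^ (i + 1) * (m.choose (i + 1) : ℚ) *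
          (poch a (i + 1) / poch c (i + 1)) = ∑ i ∈ range (m + 1), (-1 : ℚ) ^ (i + 1) *
          (m.choose (i + 1) : ℚ) * (poch a (i + 1) / poch c (i + 1)) := by
        rw [sum_range_succ]; simp
      rw [this, add_sub_right_comm, ← sum_sub_distrib]
      congr 1
      · refine sum_congr rfl fun i _ => ?_
        rw [Nat.choose_succ_succ, poch_succ', poch_succ']
        have := (poch_pos (show 0 < c + 1 by linarith) i).ne'
        push_cast
        field_simp
        ring
      · simp
    rw [key, h1, h2, poch_succ]
    have e : poch c m * (c + m) = c * poch (c + 1) m := by rw [← poch_succ, poch_succ']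
    have hA := (poch_pos hc m).ne'
    have hB := (poch_pos (show 0 < c + 1 by linarith) m).ne'
    have hC : c + m ≠ 0 := by positivity
    rw [show c + 1 - (a + 1) = c - a by ring, poch_succ]
    have : poch (c + 1) m = poch c m * (c + m) / c := by rw [e]; field_simp
    rw [this]
    field_simp
    ring

/-- The sum `∑_{i ≤ M} (-1)^i / ((i+1) (M+1) C(M,i))` of reciprocal binomial coefficients, written
with factorials. -/
def cc (M : ℕ) : ℚ :=
  ∑ i ∈ range (M + 1), (-1) ^ i * (i.factorial * (M - i).factorial) / ((i + 1) * (M + 1).factorial)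

/-- The alternating sum of reciprocal binomial coefficients, which telescopes. -/
lemma alt_sum (M : ℕ) :
    (M + 2 : ℚ) * ∑ i ∈ range (M + 1), (-1 : ℚ) ^ i * (i.factorial * (M - i).factorial) =
      (M + 1).factorial * (1 + (-1) ^ M) := by
  have : ∀ i ∈ range (M + 1), (M + 2 : ℚ) * ((-1 : ℚ) ^ i * (i.factorial * (M - i).factorial)) =
      (-1) ^ i * (i.factorial * (M + 1 - i).factorial) -
      (-1) ^ (i + 1) * ((i + 1).factorial * (M + 1 - (i + 1)).factorial) := by
    intro i hi
    obtain ⟨d, rfl⟩ := Nat.exists_eq_add_of_le (Nat.lt_succ_iff.1 (mem_range.1 hi))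
    rw [show i + d - i = d by omega, show i + d + 1 - i = d + 1 by omega,
      show i + d + 1 - (i + 1) = d by omega, Nat.factorial_succ, Nat.factorial_succ]
    push_cast; ring
  rw [mul_sum, sum_congr rfl this, sum_range_sub' (fun i => (-1 : ℚ) ^ i *
    (i.factorial * (M + 1 - i).factorial))]
  simp
  ring

/-- By `alt_sum`, `cc (M + 1) - cc M` is a multiple of `1 / (M + 2)²`. -/
lemma cc_eq (M : ℕ) : cc M =
    -2 * ∑ i ∈ range (M + 1), (-1 : ℚ) ^ (i + 1) / (i + 1) ^ 2 -
      ∑ i ∈ range (M + 1), 1 / ((i : ℚ) + 1) ^ 2 := by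
  induction M with
  | zero => simp [cc]; norm_num
  | succ M ih =>
    rw [sum_range_succ, sum_range_succ (fun i : ℕ => 1 / ((i : ℚ) + 1) ^ 2)]
    have h1 : cc (M + 1) = cc M - (∑ i ∈ range (M + 1), (-1 : ℚ) ^ i *
        (i.factorial * (M - i).factorial)) / (M + 2).factorial + (-1) ^ (M + 1) / (M + 2) ^ 2 := by
      rw [cc, sum_range_succ, cc, sum_div, ← sum_sub_distrib]
      congr 1
      · refine sum_congr rfl fun i hi => ?_
        obtain ⟨d, rfl⟩ := Nat.exists_eq_add_of_le (Nat.lt_succ_iff.1 (mem_range.1 hi))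
        rw [show i + d - i = d by omega, show i + d + 1 - i = d + 1 by omega,
          show i + d + 2 = i + d + 1 + 1 by ring, Nat.factorial_succ (i + d + 1),
          Nat.factorial_succ d]
        have : ((i + d + 1).factorial : ℚ) ≠ 0 := by positivity
        have : ((i : ℚ) + d + 1 + 1) ≠ 0 := by positivity
        push_cast
        field_simp
        ring
      · rw [Nat.factorial_succ (M + 1)]
        have : ((M + 1).factorial : ℚ) ≠ 0 := by positivity
        simp
        field_simp
        ring
    have h2 := alt_sum M
    rw [h1, ih, Nat.factorial_succ (M + 1)]
    have hf : ((M + 1).factorial : ℚ) ≠ 0 := by positivity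
    have h3 : ∑ i ∈ range (M + 1), (-1 : ℚ) ^ i * (i.factorial * (M - i).factorial) =
      (M + 1).factorial * (1 + (-1) ^ M) / (M + 2) := by
      rw [← h2]; field_simp
    rw [h3]
    push_cast
    have : ((M : ℚ) + 1 + 1) ≠ 0 := by positivity
    field_simp
    ring

/-! ### Congruences between rational numbers -/

section

variable {p : ℕ} [hp : Fact p.Prime]

/-- The ring `ℤ_(p)` of `p`-integral rational numbers. -/
def Zl (p : ℕ) [Fact p.Prime] : Subring ℚ where
  carrier := {x | padicNorm p x ≤ 1}
  zero_mem' := by simp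
  one_mem' := by simp
  add_mem' := fun {a b} ha hb => padicNorm.nonarchimedean.trans (max_le ha hb)
  neg_mem' := fun {a} ha => by simpa using ha
  mul_mem' := fun {a b} ha hb => by
    simp only [Set.mem_ofPred_eq, padicNorm.mul] at *
    exact mul_le_one₀ ha (padicNorm.nonneg _) hb

lemma mem_Zl {x : ℚ} : x ∈ Zl p ↔ padicNorm p x ≤ 1 := Iff.rfl

/-- Being a unit of `ℤ_(p)`. -/
def Un (p : ℕ) (x : ℚ) : Prop := padicNorm p x = 1

lemma Un.mem {x : ℚ} (h : Un p x) : x ∈ Zl p := le_of_eq h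

lemma Un.ne {p : ℕ} {x : ℚ} (h : Un p x) : x ≠ 0 := by
  rintro rfl; simp [Un] at h

lemma Un.mul {x y : ℚ} (h : Un p x) (h' : Un p y) : Un p (x * y) := by
  simp only [Un, padicNorm.mul] at *; rw [h, h', one_mul]

lemma Un.inv {x : ℚ} (h : Un p x) : Un p x⁻¹ := by
  have := padicNorm.div (p := p) 1 x
  simp only [Un] at *
  rw [← one_div, this, h]; simp

lemma Un.pow {x : ℚ} (h : Un p x) (n : ℕ) : Un p (x ^ n) := by
  induction n with
  | zero => simp [Un]
  | succ n ih => rw [pow_succ]; exact ih.mul h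

lemma Un.prod {ι : Type*} {s : Finset ι} {f : ι → ℚ} (h : ∀ i ∈ s, Un p (f i)) :
    Un p (∏ i ∈ s, f i) := by
  classical
  induction s using Finset.induction_on with
  | empty => simp [Un]
  | insert a s ha ih =>
    rw [prod_insert ha]
    exact (h a (mem_insert_self _ _)).mul (ih fun i hi => h i (mem_insert_of_mem hi))

lemma un_nat {n : ℕ} (h0 : 0 < n) (h : n < p) : Un p (n : ℚ) :=
  (padicNorm.nat_eq_one_iff n).2 fun hd => absurd (Nat.le_of_dvd h0 hd) (by omega)

/-- Congruence modulo `p ^ k` in `ℚ`: the difference lies in `p ^ k ℤ_(p)`. -/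
def Cg (p : ℕ) [Fact p.Prime] (k : ℕ) (x y : ℚ) : Prop := ∃ z ∈ Zl p, x - y = (p : ℚ) ^ k * z

lemma Cg.refl (k : ℕ) (x : ℚ) : Cg p k x x := ⟨0, zero_mem _, by simp⟩

lemma Cg.symm {k : ℕ} {x y : ℚ} (h : Cg p k x y) : Cg p k y x := by
  obtain ⟨z, hz, e⟩ := h
  exact ⟨-z, neg_mem hz, by linear_combination -e⟩

lemma Cg.trans {k : ℕ} {x y w : ℚ} (h : Cg p k x y) (h' : Cg p k y w) : Cg p k x w := by
  obtain ⟨z, hz, e⟩ := h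
  obtain ⟨z', hz', e'⟩ := h'
  exact ⟨z + z', add_mem hz hz', by linear_combination e + e'⟩

lemma Cg.add {k : ℕ} {x y x' y' : ℚ} (h : Cg p k x y) (h' : Cg p k x' y') :
    Cg p k (x + x') (y + y') := by
  obtain ⟨z, hz, e⟩ := h
  obtain ⟨z', hz', e'⟩ := h'
  exact ⟨z + z', add_mem hz hz', by linear_combination e + e'⟩

lemma Cg.mul {k : ℕ} {x y x' y' : ℚ} (h : Cg p k x y) (h' : Cg p k x' y') (hx : x ∈ Zl p)
    (hy' : y' ∈ Zl p) : Cg p k (x * x') (y * y') := by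
  obtain ⟨z, hz, e⟩ := h
  obtain ⟨z', hz', e'⟩ := h'
  exact ⟨z * y' + x * z', add_mem (mul_mem hz hy') (mul_mem hx hz'),
    by linear_combination y' * e + x * e'⟩

lemma Cg.mul_left {k : ℕ} {x y a : ℚ} (ha : a ∈ Zl p) (h : Cg p k x y) :
    Cg p k (a * x) (a * y) := by
  obtain ⟨z, hz, e⟩ := h
  exact ⟨a * z, mul_mem ha hz, by linear_combination a * e⟩

lemma Cg.p_mul {k : ℕ} {x y : ℚ} (j : ℕ) (h : Cg p k x y) :
    Cg p (j + k) ((p : ℚ) ^ j * x) ((p : ℚ) ^ j * y) := by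
  obtain ⟨z, hz, e⟩ := h
  exact ⟨z, hz, by rw [pow_add]; linear_combination (p : ℚ) ^ j * e⟩

lemma nat_mem (n : ℕ) : (n : ℚ) ∈ Zl p := natCast_mem _ n

lemma Cg.mono {k l : ℕ} {x y : ℚ} (hkl : l ≤ k) (h : Cg p k x y) : Cg p l x y := by
  obtain ⟨z, hz, e⟩ := h
  obtain ⟨d, rfl⟩ := Nat.exists_eq_add_of_le hkl
  exact ⟨(p : ℚ) ^ d * z, mul_mem (pow_mem (nat_mem p) d) hz, by rw [e, pow_add]; ring⟩

lemma Cg.mem {k : ℕ} {x y : ℚ} (h : Cg p k x y) (hy : y ∈ Zl p) : x ∈ Zl p := by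
  obtain ⟨z, hz, e⟩ := h
  rw [show x = y + (p : ℚ) ^ k * z by linear_combination e]
  exact add_mem hy (mul_mem (pow_mem (nat_mem p) k) hz)

lemma Cg.sum {ι : Type*} {k : ℕ} {s : Finset ι} {f g : ι → ℚ} (h : ∀ i ∈ s, Cg p k (f i) (g i)) :
    Cg p k (∑ i ∈ s, f i) (∑ i ∈ s, g i) := by
  classical
  induction s using Finset.induction_on with
  | empty => exact Cg.refl _ _
  | insert a s ha ih =>
    rw [sum_insert ha, sum_insert ha]
    exact (h a (mem_insert_self _ _)).add (ih fun i hi => h i (mem_insert_of_mem hi))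

lemma Cg.prod {ι : Type*} {k : ℕ} {s : Finset ι} {f g : ι → ℚ} (h : ∀ i ∈ s, Cg p k (f i) (g i))
    (hg : ∀ i ∈ s, g i ∈ Zl p) :
    Cg p k (∏ i ∈ s, f i) (∏ i ∈ s, g i) := by
  classical
  induction s using Finset.induction_on with
  | empty => exact Cg.refl _ _
  | insert a s ha ih =>
    rw [prod_insert ha, prod_insert ha]
    exact (h a (mem_insert_self _ _)).mul (ih (fun i hi => h i (mem_insert_of_mem hi))
      (fun i hi => hg i (mem_insert_of_mem hi)))
      ((h a (mem_insert_self _ _)).mem (hg a (mem_insert_self _ _)))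
      (prod_mem fun i hi => hg i (mem_insert_of_mem hi))

lemma Cg.pow {k : ℕ} {x y : ℚ} (h : Cg p k x y) (hy : y ∈ Zl p) (n : ℕ) :
    Cg p k (x ^ n) (y ^ n) := by
  simpa using Cg.prod (s := range n) (fun _ _ => h) (fun _ _ => hy)

lemma Cg.inv {k : ℕ} {x y : ℚ} (h : Cg p k x y) (hx : Un p x) (hy : Un p y) :
    Cg p k x⁻¹ y⁻¹ := by
  obtain ⟨z, hz, e⟩ := h
  refine ⟨-(z * (x⁻¹ * y⁻¹)), neg_mem (mul_mem hz (hx.inv.mul hy.inv).mem), ?_⟩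
  have := hx.ne
  have := hy.ne
  field_simp
  linear_combination -e

lemma Cg.cancel {k : ℕ} {x y u : ℚ} (hu : Un p u) (h : Cg p k (u * x) (u * y)) : Cg p k x y := by
  have := Cg.mul_left hu.inv.mem h
  rwa [inv_mul_cancel_left₀ hu.ne, inv_mul_cancel_left₀ hu.ne] at this

lemma p_ne : (p : ℚ) ≠ 0 := by exact_mod_cast hp.out.ne_zero

lemma Cg.un {k : ℕ} {x y : ℚ} (hk : k ≠ 0) (h : Cg p k x y) (hy : Un p y) : Un p x := by
  obtain ⟨z, hz, e⟩ := h
  have h1 : padicNorm p ((p : ℚ) ^ k * z) < 1 := by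
    obtain ⟨l, rfl⟩ := Nat.exists_eq_succ_of_ne_zero hk
    rw [pow_succ', mul_assoc, padicNorm.mul]
    have h2 : padicNorm p ((p : ℚ) ^ l * z) ≤ 1 := mul_mem (pow_mem (nat_mem p) l) hz
    have h3 := padicNorm.padicNorm_p_lt_one_of_prime (p := p)
    exact (mul_le_of_le_one_right (padicNorm.nonneg _) h2).trans_lt h3
  rw [show x = y + (p : ℚ) ^ k * z by linear_combination e, Un]
  have hy' : padicNorm p y = 1 := hy
  rw [padicNorm.add_eq_max_of_ne (by rw [hy']; exact h1.ne'), hy', max_eq_left h1.le]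

lemma cg_add_p (x : ℚ) {c : ℚ} (hc : c ∈ Zl p) : Cg p 1 (x + c * p) x :=
  ⟨c, hc, by ring⟩

lemma Cg.padicNorm_le {k : ℕ} {x y : ℚ} (h : Cg p k x y) :
    padicNorm p (x - y) ≤ (p : ℚ) ^ (-(k : ℤ)) := by
  obtain ⟨z, hz, e⟩ := h
  have h3 : padicNorm p ((p : ℚ) ^ k) = (p : ℚ) ^ (-(k : ℤ)) := by
    have : ∀ k : ℕ, padicNorm p ((p : ℚ) ^ k) = (p : ℚ)⁻¹ ^ k := by
      intro k
      induction k with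
      | zero => simp
      | succ k ih => rw [pow_succ, padicNorm.mul, ih, padicNorm.padicNorm_p_of_prime, pow_succ]
    rw [this]; simp
  rw [e, padicNorm.mul, h3]
  exact mul_le_of_le_one_right (by positivity) hz

lemma int_cg {a b : ℤ} (h : (a : ZMod p) = b) : Cg p 1 a b := by
  obtain ⟨c, hc⟩ := (ZMod.intCast_eq_intCast_iff_dvd_sub b a p).1 h.symm
  exact ⟨c, intCast_mem _ c, by rw [pow_one]; exact_mod_cast hc⟩

/-! ### Harmonic sums and Wolstenholme-type products -/

/-- Fermat: `1 / n² ≡ n^(p-3)`. -/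
lemma fermat_inv_sq {n : ℕ} (hp3 : 3 ≤ p) (h0 : 0 < n) (h : n < p) :
    Cg p 1 (1 / (n : ℚ) ^ 2) ((n : ℚ) ^ (p - 3)) := by
  have hu := un_nat (p := p) h0 h
  refine Cg.cancel (hu.pow 2) ?_
  rw [mul_one_div_cancel (hu.pow 2).ne, ← pow_add, show 2 + (p - 3) = p - 1 by omega]
  have : ((1 : ℤ) : ZMod p) = ((n : ℤ) ^ (p - 1) : ℤ) := by
    push_cast
    rw [ZMod.pow_card_sub_one_eq_one]
    rw [Ne, ZMod.natCast_eq_zero_iff]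
    exact fun hd => absurd (Nat.le_of_dvd h0 hd) (by omega)
  simpa using int_cg this

lemma two_un (h3 : 3 ≤ p) : Un p (2 : ℚ) := by
  exact_mod_cast un_nat (p := p) (n := 2) (by norm_num) (by omega)

lemma half_mem (h3 : 3 ≤ p) : (1 / 2 : ℚ) ∈ Zl p := by
  rw [one_div]; exact (two_un h3).inv.mem

/-- `∑_{i=1}^{p-1} 1/i² ≡ 0 (mod p)`. -/
lemma H2_full (h5 : 5 ≤ p) : Cg p 1 (∑ i ∈ range (p - 1), 1 / ((i : ℚ) + 1) ^ 2) 0 := by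
  have h1 : Cg p 1 (∑ i ∈ range (p - 1), 1 / ((i : ℚ) + 1) ^ 2)
      (∑ i ∈ range (p - 1), ((i : ℚ) + 1) ^ (p - 3)) := by
    refine Cg.sum fun i hi => ?_
    have := mem_range.1 hi
    have := fermat_inv_sq (p := p) (n := i + 1) (by omega) (by omega) (by omega)
    exact_mod_cast this
  refine h1.trans ?_
  have h2 : ((∑ i ∈ range (p - 1), ((i : ℤ) + 1) ^ (p - 3) : ℤ) : ZMod p) = (0 : ℤ) := by
    have h3 := FiniteField.sum_pow_lt_card_sub_one (K := ZMod p) (p - 3) (by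
      rw [ZMod.card]; omega)
    have h4 : ∑ x : ZMod p, x ^ (p - 3) = ∑ i ∈ range p, (i : ZMod p) ^ (p - 3) := by
      symm
      refine sum_bij (fun i _ => (i : ZMod p)) (fun _ _ => mem_univ _) ?_ ?_ (fun _ _ => rfl)
      · intro a ha b hb hab
        rw [mem_range] at ha hb
        have := (ZMod.natCast_eq_natCast_iff' a b p).1 hab
        rwa [Nat.mod_eq_of_lt ha, Nat.mod_eq_of_lt hb] at this
      · intro x _
        exact ⟨x.val, mem_range.2 (ZMod.val_lt x), by simp⟩
    rw [h4, show range p = range (p - 1 + 1) by congr; omega, sum_range_succ'] at h3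
    push_cast
    rw [← h3]
    simp [show p - 3 ≠ 0 by omega]
  have := int_cg h2
  exact_mod_cast this

/-- `∑_{i=1}^{p-1} 1/i ≡ 0 (mod p²)`. -/
lemma H_full (h5 : 5 ≤ p) : Cg p 2 (∑ i ∈ range (p - 1), 1 / ((i : ℚ) + 1)) 0 := by
  have hrefl := sum_range_reflect (fun i : ℕ => 1 / ((i : ℚ) + 1)) (p - 1)
  have hcast : ∀ i ∈ range (p - 1), (((p - 1 - 1 - i : ℕ) : ℚ) + 1) = p - (i + 1) := by
    intro i hi
    have := mem_range.1 hi
    rw [Nat.cast_sub (by omega), Nat.cast_sub (by omega), Nat.cast_sub (by omega)]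
    push_cast; ring
  have hun : ∀ i ∈ range (p - 1), Un p ((i : ℚ) + 1) ∧ Un p ((p : ℚ) - (i + 1)) := by
    intro i hi
    have hi' := mem_range.1 hi
    refine ⟨by exact_mod_cast un_nat (p := p) (n := i + 1) (by omega) (by omega), ?_⟩
    rw [← hcast i hi]
    exact_mod_cast un_nat (p := p) (n := p - 1 - 1 - i + 1) (by omega) (by omega)
  have e : 2 * ∑ i ∈ range (p - 1), 1 / ((i : ℚ) + 1) =
      p * ∑ i ∈ range (p - 1), 1 / (((i : ℚ) + 1) * (p - (i + 1))) := by
    rw [two_mul, mul_sum]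
    nth_rw 1 [← hrefl]
    rw [← sum_add_distrib]
    refine sum_congr rfl fun i hi => ?_
    rw [hcast i hi]
    have h1 := (hun i hi).1.ne
    have h2 := (hun i hi).2.ne
    field_simp
    ring
  have h1 : Cg p 1 (∑ i ∈ range (p - 1), 1 / (((i : ℚ) + 1) * (p - (i + 1))))
      (∑ i ∈ range (p - 1), (-1) * (1 / ((i : ℚ) + 1) ^ 2)) := by
    refine Cg.sum fun i hi => ?_
    obtain ⟨h1, h2⟩ := hun i hi
    refine ⟨1 / (((i : ℚ) + 1) ^ 2 * (p - (i + 1))), ?_, ?_⟩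
    · rw [one_div]; exact ((h1.pow 2).mul h2).inv.mem
    · have h1 := h1.ne
      have h2 := h2.ne
      field_simp
      ring
  rw [← mul_sum] at h1
  have h2 := h1.trans (Cg.mul_left (by exact neg_mem (one_mem _)) (H2_full h5))
  have h3 := Cg.p_mul 1 h2
  refine Cg.cancel (two_un (by omega)) ?_
  rw [e]
  simpa using h3

/-- `∑_{i=1}^{(p-1)/2} 1/i² ≡ 0 (mod p)`. -/
lemma H2_half (h5 : 5 ≤ p) {m : ℕ} (hm : p = 2 * m + 1) :
    Cg p 1 (∑ i ∈ range m, 1 / ((i : ℚ) + 1) ^ 2) 0 := by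
  refine Cg.cancel (two_un (by omega)) ?_
  rw [mul_zero]
  refine Cg.trans ?_ (H2_full h5)
  rw [show p - 1 = m + m by omega, sum_range_add, two_mul]
  refine (Cg.refl _ _).add ?_
  rw [← sum_range_reflect]
  refine Cg.sum fun i hi => ?_
  have hi' := mem_range.1 hi
  have hpq : (p : ℚ) = 2 * m + 1 := by exact_mod_cast hm
  have e1 : (((m - 1 - i : ℕ) : ℚ) + 1) = m - i := by
    rw [Nat.cast_sub (by omega), Nat.cast_sub (by omega)]
    push_cast; ring
  rw [e1, one_div, one_div]
  have hu1 : Un p ((m : ℚ) - i) := by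
    rw [← e1]; exact_mod_cast un_nat (p := p) (n := m - 1 - i + 1) (by omega) (by omega)
  have hu2 : Un p (((m + i : ℕ) : ℚ) + 1) := by
    exact_mod_cast un_nat (p := p) (n := m + i + 1) (by omega) (by omega)
  refine Cg.inv ?_ (hu1.pow 2) (hu2.pow 2)
  refine ⟨-((m + i + 1 : ℕ) : ℚ) + (m - i), add_mem (neg_mem (nat_mem _)) hu1.mem, ?_⟩
  rw [hpq]; push_cast; ring

/-- Second-order expansion of a product of factors `1 + p t aᵢ`. -/
lemma prod_expand (h3 : 3 ≤ p) {t : ℚ} (ht : t ∈ Zl p) (a : ℕ → ℚ) (n : ℕ)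
    (ha : ∀ i < n, a i ∈ Zl p) :
    Cg p 3 (∏ i ∈ range n, (1 + t * p * a i))
      (1 + t * p * (∑ i ∈ range n, a i) +
        t ^ 2 * p ^ 2 * ((∑ i ∈ range n, a i) ^ 2 - ∑ i ∈ range n, a i ^ 2) * (1 / 2)) := by
  induction n with
  | zero => simpa using Cg.refl _ _
  | succ n ih =>
    have ih := ih fun i hi => ha i (by omega)
    have han := ha n (by omega)
    rw [prod_range_succ]
    have hA : ∑ i ∈ range n, a i ∈ Zl p :=
      sum_mem fun i hi => ha i (by have := mem_range.1 hi; omega)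
    have hB : ∑ i ∈ range n, a i ^ 2 ∈ Zl p :=
      sum_mem fun i hi => pow_mem (ha i (by have := mem_range.1 hi; omega)) 2
    have hq : (p : ℚ) ∈ Zl p := nat_mem p
    have hl : (1 + t * p * a n) ∈ Zl p := add_mem (one_mem _) (mul_mem (mul_mem ht hq) han)
    have h1 := Cg.mul_left hl ih
    rw [mul_comm] at h1
    refine h1.trans ?_
    rw [sum_range_succ, sum_range_succ]
    refine ⟨t ^ 3 * a n * ((∑ i ∈ range n, a i) ^ 2 - ∑ i ∈ range n, a i ^ 2) * (1 / 2),
      mul_mem (mul_mem (mul_mem (pow_mem ht 3) han) (sub_mem (pow_mem hA 2) hB)) (half_mem h3), ?_⟩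
    ring

/-- `∏_{i=1}^{p-1} (1 + c p / i) ≡ 1 (mod p³)`. -/
lemma W_cg (h5 : 5 ≤ p) {c : ℚ} (hc : c ∈ Zl p) :
    Cg p 3 (∏ i ∈ range (p - 1), (1 + c * p * (1 / ((i : ℚ) + 1)))) 1 := by
  have ha : ∀ i < p - 1, 1 / ((i : ℚ) + 1) ∈ Zl p := by
    intro i hi
    rw [one_div]
    have : Un p ((i : ℚ) + 1) := by
      exact_mod_cast un_nat (p := p) (n := i + 1) (by omega) (by omega)
    exact this.inv.mem
  refine (prod_expand (by omega) hc _ _ ha).trans ?_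
  obtain ⟨x, hx, ex⟩ := H_full (p := p) h5
  obtain ⟨y, hy, ey⟩ := H2_full (p := p) h5
  simp only [one_div, inv_pow, sub_zero] at ex ey ⊢
  rw [ex, ey]
  have hq : (p : ℚ) ∈ Zl p := nat_mem p
  refine ⟨c * x + c ^ 2 * (p ^ 3 * x ^ 2 - y) * (1 / 2), add_mem (mul_mem hc hx) (mul_mem (mul_mem
    (pow_mem hc 2) (sub_mem (mul_mem (pow_mem hq 3) (pow_mem hx 2)) hy)) (half_mem (by omega))), ?_⟩
  ring

/-- `∏_{i=1}^m (1 + c p / i)`. -/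
def PP (p m : ℕ) (c : ℚ) : ℚ := ∏ i ∈ range m, (1 + c * p * (1 / ((i : ℚ) + 1)))

/-- `exp (c p H_m)` truncated after the quadratic term. -/
def ee (p m : ℕ) (c : ℚ) : ℚ :=
  1 + c * p * (∑ i ∈ range m, 1 / ((i : ℚ) + 1)) +
    (c * p * (∑ i ∈ range m, 1 / ((i : ℚ) + 1))) ^ 2 * (1 / 2)

lemma un_succ {m i : ℕ} (hm : p = 2 * m + 1) (hi : i < m) : Un p ((i : ℚ) + 1) := by
  exact_mod_cast un_nat (p := p) (n := i + 1) (by omega) (by omega)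

lemma H_mem {m : ℕ} (hm : p = 2 * m + 1) : ∑ i ∈ range m, 1 / ((i : ℚ) + 1) ∈ Zl p :=
  sum_mem fun i hi => by
    rw [one_div]; exact (un_succ hm (mem_range.1 hi)).inv.mem

/-- Since `∑_{i ≤ m} 1/i² ≡ 0 (mod p)`, the product `∏_{i ≤ m} (1 + c p / i)` agrees with
`exp (c p H_m)` modulo `p³`. -/
lemma PP_cg (h5 : 5 ≤ p) {m : ℕ} (hm : p = 2 * m + 1) {c : ℚ} (hc : c ∈ Zl p) :
    Cg p 3 (PP p m c) (ee p m c) := by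
  have ha : ∀ i < m, 1 / ((i : ℚ) + 1) ∈ Zl p := by
    intro i hi
    rw [one_div]; exact (un_succ hm hi).inv.mem
  refine (prod_expand (by omega) hc _ _ ha).trans ?_
  obtain ⟨y, hy, ey⟩ := H2_half (p := p) h5 hm
  unfold ee
  simp only [one_div, inv_pow, sub_zero] at ey ⊢
  rw [ey]
  refine ⟨-(c ^ 2 * y * (1 / 2)), neg_mem (mul_mem (mul_mem (pow_mem hc 2) hy)
    (half_mem (by omega))), ?_⟩
  ring

lemma ee_mem (h3 : 3 ≤ p) {m : ℕ} (hm : p = 2 * m + 1) {c : ℚ} (hc : c ∈ Zl p) :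
    ee p m c ∈ Zl p := by
  have h := mul_mem (mul_mem hc (nat_mem p)) (H_mem (p := p) hm)
  exact add_mem (add_mem (one_mem _) h) (mul_mem (pow_mem h 2) (half_mem h3))

lemma ee_mul (h3 : 3 ≤ p) {m : ℕ} (hm : p = 2 * m + 1) {a b : ℚ} (ha : a ∈ Zl p) (hb : b ∈ Zl p) :
    Cg p 3 (ee p m a * ee p m b) (ee p m (a + b)) := by
  have hH := H_mem (p := p) hm
  unfold ee
  set H := ∑ i ∈ range m, 1 / ((i : ℚ) + 1)
  have h2 := half_mem (p := p) h3
  have hq : (p : ℚ) ∈ Zl p := nat_mem p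
  refine ⟨(a * b * (a + b)) * H ^ 3 * (1 / 2) + p * (a ^ 2 * b ^ 2 * H ^ 4 * (1 / 2) * (1 / 2)),
    add_mem (mul_mem (mul_mem (mul_mem (mul_mem ha hb) (add_mem ha hb)) (pow_mem hH 3)) h2)
      (mul_mem hq (mul_mem (mul_mem (mul_mem (mul_mem (pow_mem ha 2) (pow_mem hb 2))
        (pow_mem hH 4)) h2) h2)), ?_⟩
  ring

lemma PP_un {m : ℕ} (hm : p = 2 * m + 1) {c : ℚ} (hc : c ∈ Zl p) :
    Un p (PP p m c) := by
  refine Un.prod fun i hi => ?_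
  have hu := un_succ (p := p) hm (mem_range.1 hi)
  have : Cg p 1 (1 + c * p * (1 / ((i : ℚ) + 1))) 1 := by
    rw [show c * p * (1 / ((i : ℚ) + 1)) = (c * ((i : ℚ) + 1)⁻¹) * p by ring]
    exact cg_add_p 1 (mul_mem hc hu.inv.mem)
  exact this.un one_ne_zero (by simp [Un])

lemma PP_poch (p m : ℕ) (c : ℚ) : poch (1 + c * p) m = m.factorial * PP p m c := by
  rw [← poch_one, poch, poch, PP, ← prod_mul_distrib]
  refine prod_congr rfl fun i _ => ?_
  have : (i : ℚ) + 1 ≠ 0 := by positivity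
  field_simp
  ring

end

/-! ### Euler numbers -/

section Euler

variable {E : ℕ → ℤ}

lemma euler_odd (hE : ∀ n : ℕ, 1 ≤ n → (∑ k ∈ range (n + 1),
    if 2 ∣ k then (n.choose k : ℤ) * E (n - k) else 0) = 0) (n : ℕ) (hn : Odd n) : E n = 0 := by
  induction n using Nat.strong_induction_on with
  | _ n ih =>
    have h := hE n hn.pos
    rw [sum_range_succ', sum_eq_zero] at h
    · simpa using h
    · intro k hk
      have hk := mem_range.1 hk
      split_ifs with h2
      · rw [ih (n - (k + 1)) (by omega) ?_, mul_zero]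
        exact Nat.Odd.sub_even (by omega) hn (even_iff_two_dvd.2 h2)
      · rfl

/-- `∑ C(n,k) E_{n-k} y^k`, that is, `2ⁿ` times the Euler polynomial of degree `n` at
`(y + 1) / 2`. -/
def DD (E : ℕ → ℤ) (n : ℕ) (y : ℤ) : ℤ := ∑ k ∈ range (n + 1), (n.choose k : ℤ) * E (n - k) * y ^ k

lemma DD_one (hE : ∀ n : ℕ, 1 ≤ n → (∑ k ∈ range (n + 1),
    if 2 ∣ k then (n.choose k : ℤ) * E (n - k) else 0) = 0) (n : ℕ) (hn : Even n) (h1 : 1 ≤ n) :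
    DD E n 1 = 0 := by
  rw [DD, ← hE n h1]
  refine sum_congr rfl fun k hk => ?_
  have hk := mem_range.1 hk
  split_ifs with h2
  · simp
  · rw [euler_odd hE (n - k) ?_]
    · simp
    · exact Nat.Even.sub_odd (by omega) hn (Nat.not_even_iff_odd.1 (by rwa [even_iff_two_dvd]))

/-- The functional equation `E_n(x + 1) + E_n(x) = 2 xⁿ` of the Euler polynomials. -/
lemma DD_add (hE0 : E 0 = 1) (hE : ∀ n : ℕ, 1 ≤ n → (∑ k ∈ range (n + 1),
    if 2 ∣ k then (n.choose k : ℤ) * E (n - k) else 0) = 0) (n : ℕ) (y : ℤ) :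
    DD E n (y + 1) + DD E n (y - 1) = 2 * y ^ n := by
  have hpow : ∀ k ∈ range (n + 1), (y + 1) ^ k + (y - 1) ^ k =
      ∑ i ∈ range (n + 1), y ^ i * (1 + (-1) ^ (k - i)) * (k.choose i : ℤ) := by
    intro k hk
    have hk := mem_range.1 hk
    rw [sub_eq_add_neg, add_pow, add_pow, ← sum_add_distrib]
    refine (sum_congr rfl fun i _ => ?_).trans (sum_subset (range_subset_range.2 hk) ?_)
    · rw [one_pow]; ring
    · intro i _ hi
      rw [Nat.choose_eq_zero_of_lt (by simpa using hi)]; simp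
  have h1 : DD E n (y + 1) + DD E n (y - 1) = ∑ k ∈ range (n + 1), ∑ i ∈ range (n + 1),
      (n.choose k : ℤ) * E (n - k) * (y ^ i * (1 + (-1) ^ (k - i)) * (k.choose i : ℤ)) := by
    rw [DD, DD, ← sum_add_distrib]
    refine sum_congr rfl fun k hk => ?_
    rw [← mul_add, hpow k hk, mul_sum]
  rw [h1, sum_comm]
  have h2 : ∀ i ∈ range (n + 1), ∑ k ∈ range (n + 1),
      (n.choose k : ℤ) * E (n - k) * (y ^ i * (1 + (-1) ^ (k - i)) * (k.choose i : ℤ)) =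
      2 * (n.choose i : ℤ) * y ^ i * ∑ l ∈ range (n - i + 1),
        if 2 ∣ l then ((n - i).choose l : ℤ) * E (n - i - l) else 0 := by
    intro i hi
    have hi := mem_range.1 hi
    rw [show range (n + 1) = range (i + (n - i + 1)) by congr 1; omega, sum_range_add,
      sum_eq_zero, zero_add, mul_sum]
    · refine sum_congr rfl fun l hl => ?_
      have hl := mem_range.1 hl
      have hc : ((n.choose (i + l) : ℕ) : ℤ) * ((i + l).choose i : ℕ) =
          (n.choose i : ℕ) * ((n - i).choose l : ℕ) := by
        have := Nat.choose_mul (n := n) (k := i + l) (s := i) (by omega)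
        rw [Nat.add_sub_cancel_left] at this
        exact_mod_cast this
      rw [Nat.add_sub_cancel_left, Nat.sub_add_eq]
      split_ifs with h2
      · rw [(even_iff_two_dvd.2 h2).neg_one_pow]
        linear_combination 2 * E (n - i - l) * y ^ i * hc
      · rw [(Nat.not_even_iff_odd.1 (by rwa [even_iff_two_dvd])).neg_one_pow]
        ring
    · intro k hk
      rw [Nat.choose_eq_zero_of_lt (mem_range.1 hk)]; simp
  rw [sum_congr rfl h2, sum_range_succ, sum_eq_zero]
  · simp [hE0]
  · intro i hi
    rw [hE (n - i) (by have := mem_range.1 hi; omega), mul_zero]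

variable {p : ℕ} [hp : Fact p.Prime]

/-- `∑_{j=1}^{m} (-1)^j / j² ≡ 2 (-1)^m E_{p-3} (mod p)`: replace `1/j²` by `j^(p-3)` and
telescope with `DD_add`, using that the polynomial `DD` takes the value `E_{p-3}` at `2m+1 = p`
modulo `p`. -/
lemma euler_cg (h5 : 5 ≤ p) {m : ℕ} (hm : p = 2 * m + 1) (hE0 : E 0 = 1)
    (hE : ∀ n : ℕ, 1 ≤ n → (∑ k ∈ range (n + 1),
      if 2 ∣ k then (n.choose k : ℤ) * E (n - k) else 0) = 0) :
    Cg p 1 (∑ i ∈ range m, (-1 : ℚ) ^ (i + 1) / ((i : ℚ) + 1) ^ 2)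
      (2 * (-1) ^ m * E (p - 3)) := by
  have h1 : Cg p 1 (∑ i ∈ range m, (-1 : ℚ) ^ (i + 1) / ((i : ℚ) + 1) ^ 2)
      (∑ i ∈ range m, (-1 : ℚ) ^ (i + 1) * ((i : ℚ) + 1) ^ (p - 3)) := by
    refine Cg.sum fun i hi => ?_
    have hi := mem_range.1 hi
    have h := fermat_inv_sq (p := p) (n := i + 1) (by omega) (by omega) (by omega)
    have h' := Cg.mul_left (a := (-1) ^ (i + 1)) (pow_mem (neg_mem (one_mem _)) _) h
    rw [mul_one_div] at h'
    exact_mod_cast h'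
  refine h1.trans ?_
  have htel : ∑ i ∈ range m, (-1 : ℤ) ^ (i + 1) * (2 * (2 * ((i : ℤ) + 1)) ^ (p - 3)) =
      (-1) ^ m * DD E (p - 3) (2 * m + 1) := by
    have : ∀ i ∈ range m, (-1 : ℤ) ^ (i + 1) * (2 * (2 * ((i : ℤ) + 1)) ^ (p - 3)) =
        (-1) ^ (i + 1) * DD E (p - 3) (2 * (i + 1 : ℕ) + 1) -
          (-1) ^ i * DD E (p - 3) (2 * i + 1) := by
      intro i _
      rw [← DD_add hE0 hE]
      push_cast
      rw [show 2 * ((i : ℤ) + 1) - 1 = 2 * i + 1 by ring]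
      ring
    rw [sum_congr rfl this, sum_range_sub (fun i : ℕ => (-1 : ℤ) ^ i *
      DD E (p - 3) (2 * i + 1))]
    have h0 := DD_one hE (p - 3) ⟨m - 1, by omega⟩ (by omega)
    simp [h0]
  have hDD : ((DD E (p - 3) (2 * m + 1) : ℤ) : ZMod p) = (E (p - 3) : ℤ) := by
    rw [show (2 * m + 1 : ℤ) = (p : ℤ) by exact_mod_cast hm.symm, DD, sum_range_succ']
    push_cast
    simp
  have h2 : Cg p 1 (2 ^ (p - 2) * ∑ i ∈ range m, (-1 : ℚ) ^ (i + 1) * ((i : ℚ) + 1) ^ (p - 3))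
      ((-1) ^ m * E (p - 3)) := by
    have h3 := Cg.mul_left (a := (-1) ^ m) (pow_mem (neg_mem (one_mem _)) _) (int_cg hDD)
    convert h3 using 1
    rw [show (-1 : ℚ) ^ m * (DD E (p - 3) (2 * m + 1) : ℤ) =
      (((-1) ^ m * DD E (p - 3) (2 * m + 1) : ℤ) : ℚ) by push_cast; ring, ← htel]
    push_cast
    rw [mul_sum]
    refine sum_congr rfl fun i _ => ?_
    rw [mul_pow, show p - 2 = p - 3 + 1 by omega, pow_succ]
    ring
  have h4 : Cg p 1 ((2 : ℚ) ^ (p - 1)) 1 := by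
    have : (((2 : ℤ) ^ (p - 1) : ℤ) : ZMod p) = (1 : ℤ) := by
      push_cast
      rw [ZMod.pow_card_sub_one_eq_one]
      intro h
      have h' : ((2 : ℕ) : ZMod p) = 0 := by exact_mod_cast h
      rw [ZMod.natCast_eq_zero_iff] at h'
      exact absurd (Nat.le_of_dvd (by norm_num) h') (by omega)
    exact_mod_cast int_cg this
  have hu := two_un (p := p) (by omega)
  have hsum : ∑ i ∈ range m, (-1 : ℚ) ^ (i + 1) * ((i : ℚ) + 1) ^ (p - 3) ∈ Zl p :=
    sum_mem fun i _ => mul_mem (pow_mem (neg_mem (one_mem _)) _)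
      (pow_mem (add_mem (nat_mem i) (one_mem _)) _)
  have h5 := Cg.mul_left hu.mem h2
  rw [← mul_assoc, ← pow_succ', show p - 2 + 1 = p - 1 by omega] at h5
  have h6 := h4.mul (Cg.refl 1 (∑ i ∈ range m, (-1 : ℚ) ^ (i + 1) * ((i : ℚ) + 1) ^ (p - 3)))
    (hu.pow _).mem hsum
  rw [one_mul] at h6
  rw [mul_assoc]
  exact h6.symm.trans h5

end Euler

/-! ### Rising factorials of `1/2` cut at multiples of `p` -/

section Blocks

lemma poch_half_m {p m : ℕ} (hm : p = 2 * m + 1) :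
    poch (1 / 2) m = (-1) ^ m * m.factorial * PP p m (-1 / 2) := by
  have hpq : (p : ℚ) = 2 * m + 1 := by exact_mod_cast hm
  rw [mul_assoc, ← PP_poch, poch, poch, ← prod_range_reflect, ← card_range m, ← prod_const,
    card_range, ← prod_mul_distrib]
  refine prod_congr rfl fun i hi => ?_
  have hi := mem_range.1 hi
  rw [Nat.cast_sub (by omega), Nat.cast_sub (by omega), hpq]
  push_cast; ring

lemma fact_p_sub_one {p m : ℕ} (hm : p = 2 * m + 1) :
    ((p - 1).factorial : ℚ) = (-1) ^ m * m.factorial ^ 2 * PP p m (-1) := by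
  have hpq : (p : ℚ) = 2 * m + 1 := by exact_mod_cast hm
  have h1 : ((p - 1).factorial : ℚ) = m.factorial * poch (m + 1) m := by
    rw [show p - 1 = m + m by omega, ← poch_one, poch_add, poch_one, add_comm (1 : ℚ)]
  rw [h1, sq, show (-1 : ℚ) ^ m * (m.factorial * m.factorial) * PP p m (-1) =
    m.factorial * ((-1) ^ m * (m.factorial * PP p m (-1))) by ring, ← PP_poch]
  congr 1
  rw [poch, poch, ← prod_range_reflect, ← card_range m, ← prod_const,
    card_range, ← prod_mul_distrib]
  refine prod_congr rfl fun i hi => ?_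
  have hi := mem_range.1 hi
  rw [Nat.cast_sub (by omega), Nat.cast_sub (by omega), hpq]
  push_cast; ring

/-- `2^(p-1) ∏ (1 - p/(2i)) = ∏ (1 - p/i)`; both sides are `(-1)^m C(p-1, m)`. -/
lemma four_pow_PP {p m : ℕ} (hm : p = 2 * m + 1) :
    4 ^ m * PP p m (-1 / 2) = PP p m (-1) := by
  have h1 := poch_half m
  rw [poch_half_m hm, show 2 * m = p - 1 by omega, fact_p_sub_one hm] at h1
  have hf : (m.factorial : ℚ) ≠ 0 := by positivity
  have hs : (-1 : ℚ) ^ m ≠ 0 := by positivity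
  have : (-1 : ℚ) ^ m * m.factorial ^ 2 * (4 ^ m * PP p m (-1 / 2)) =
    (-1 : ℚ) ^ m * m.factorial ^ 2 * PP p m (-1) := by linear_combination h1
  exact mul_left_cancel₀ (by positivity) this

lemma poch_half_succ_m {p m : ℕ} (hm : p = 2 * m + 1) :
    poch (1 / 2) (m + 1) = (-1) ^ m * m.factorial * PP p m (-1 / 2) * (p / 2) := by
  have hpq : (p : ℚ) = 2 * m + 1 := by exact_mod_cast hm
  rw [poch_succ, poch_half_m hm, hpq]; ring

lemma poch_half_p {p m : ℕ} (hm : p = 2 * m + 1) :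
    poch (1 / 2) p = (-1) ^ m * m.factorial ^ 2 * (p / 2) * PP p m (-1 / 2) * PP p m (1 / 2) := by
  have hpq : (p : ℚ) = 2 * m + 1 := by exact_mod_cast hm
  have h : poch (1 / 2) p = poch (1 / 2) (m + 1 + m) := by congr 1; omega
  rw [h, poch_add, poch_half_succ_m hm,
    show (1 / 2 + ((m + 1 : ℕ) : ℚ)) = 1 + 1 / 2 * p by rw [hpq]; push_cast; ring, PP_poch]
  ring

/-- A full block of `p` consecutive factors starting at `c p`. -/
lemma poch_block {p : ℕ} (h1 : 1 ≤ p) (c : ℚ) :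
    poch (c * p) p = c * p * ((p - 1).factorial * PP p (p - 1) c) := by
  have h : poch (c * p) p = poch (c * p) (p - 1 + 1) := by congr 1; omega
  rw [h, poch_succ', add_comm _ (1 : ℚ), PP_poch]

lemma poch_half_m_p {p m : ℕ} (hm : p = 2 * m + 1) :
    poch (1 / 2) (m + p) = (-1) ^ m * m.factorial * PP p m (-1 / 2) *
      (1 / 2 * p * ((p - 1).factorial * PP p (p - 1) (1 / 2))) := by
  have hpq : (p : ℚ) = 2 * m + 1 := by exact_mod_cast hm
  rw [poch_add, poch_half_m hm, ← poch_block (by omega)]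
  congr 2
  rw [hpq]; ring

lemma poch_half_2p {p m : ℕ} (hm : p = 2 * m + 1) :
    poch (1 / 2) (2 * p) = (-1) ^ m * m.factorial * PP p m (-1 / 2) *
      (1 / 2 * p * ((p - 1).factorial * PP p (p - 1) (1 / 2))) *
      (3 / 2 * p * (m.factorial * PP p m (3 / 2))) := by
  have hpq : (p : ℚ) = 2 * m + 1 := by exact_mod_cast hm
  have e1 : (1 / 2 + ((m + p : ℕ) : ℚ)) = 3 / 2 * p := by push_cast; rw [hpq]; ring
  have e2 : poch (1 / 2) (2 * p) = poch (1 / 2) (m + p + (m + 1)) := by congr 1; omega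
  rw [e2, poch_add, poch_half_m_p hm, e1, poch_succ', add_comm _ (1 : ℚ), PP_poch]

lemma poch_half_2p_m {p m : ℕ} (hm : p = 2 * m + 1) :
    poch (1 / 2) (2 * p + m) = (-1) ^ m * m.factorial * PP p m (-1 / 2) *
      (1 / 2 * p * ((p - 1).factorial * PP p (p - 1) (1 / 2))) *
      (3 / 2 * p * ((p - 1).factorial * PP p (p - 1) (3 / 2))) := by
  have hpq : (p : ℚ) = 2 * m + 1 := by exact_mod_cast hm
  have e1 : (1 / 2 + ((m + p : ℕ) : ℚ)) = 3 / 2 * p := by push_cast; rw [hpq]; ring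
  have e2 : poch (1 / 2) (2 * p + m) = poch (1 / 2) (m + p + p) := by congr 1; omega
  rw [e2, poch_add, poch_half_m_p hm, e1, poch_block (by omega)]

lemma fact_p {p : ℕ} (h1 : 1 ≤ p) : (p.factorial : ℚ) = p * (p - 1).factorial := by
  exact_mod_cast (Nat.mul_factorial_pred (by omega)).symm

/-- `N! = (N-j)! · N (N-1) ⋯ (N-j+1)`; the factor with index `i` is `N - i`. -/
lemma desc_fact (N j : ℕ) (hj : j ≤ N) :
    (N.factorial : ℚ) = (N - j).factorial * ∏ i ∈ range j, (((N + 1 : ℕ) : ℚ) - (i + 1)) := by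
  induction j with
  | zero => simp
  | succ j ih =>
    rw [ih (by omega), prod_range_succ, show N - j = N - (j + 1) + 1 by omega, Nat.factorial_succ]
    rw [show N - (j + 1) + 1 = N - j by omega, Nat.cast_mul, Nat.cast_sub (by omega)]
    push_cast; ring

end Blocks

variable {p : ℕ} [hp : Fact p.Prime]

lemma PP_ne {m : ℕ} (hm : p = 2 * m + 1) {c : ℚ} (hc : c ∈ Zl p) : PP p m c ≠ 0 :=
  (PP_un hm hc).ne

lemma PP_cg_one {n : ℕ} (hn : n < p) {c : ℚ} (hc : c ∈ Zl p) : Cg p 1 (PP p n c) 1 := by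
  have : Cg p 1 (PP p n c) (∏ i ∈ range n, 1) := by
    refine Cg.prod (fun i hi => ?_) fun _ _ => one_mem _
    have hi := mem_range.1 hi
    have hu : Un p ((i : ℚ) + 1) := by
      exact_mod_cast un_nat (p := p) (n := i + 1) (by omega) (by omega)
    rw [show c * p * (1 / ((i : ℚ) + 1)) = (c * ((i : ℚ) + 1)⁻¹) * p by ring]
    exact cg_add_p 1 (mul_mem hc hu.inv.mem)
  simpa using this

lemma mem_of_half (h3 : 3 ≤ p) (k : ℤ) : (k / 2 : ℚ) ∈ Zl p := by
  rw [div_eq_mul_inv]; exact mul_mem (intCast_mem _ k) (two_un h3).inv.mem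

lemma neg_one_pow_mem (n : ℕ) : ((-1 : ℚ) ^ n) ∈ Zl p := pow_mem (neg_mem (one_mem _)) n

/-! ### The terms `G(p, j+1)` with `j ≥ m` -/

lemma GG_upper (h3 : 3 ≤ p) {m : ℕ} (hm : p = 2 * m + 1) {i : ℕ} (hi : i ≤ m) :
    GG p (m + i) = (p : ℚ) * (3 * (-1) ^ m) * (((4 ^ m) ^ 4)⁻¹ * PP p m (1 / 2) *
      PP p (p - 1) (1 / 2) * PP p (p - 1) (3 / 2)) *
      ((-1) ^ i * (m.choose i : ℚ) * (i.factorial * poch (5 / 2 * p) i *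
        (poch (1 + 1 / 2 * p) i ^ 2)⁻¹)) := by
  have hpq : (p : ℚ) = 2 * m + 1 := by exact_mod_cast hm
  have hP : PP p m (-1 / 2) ≠ 0 := PP_ne hm (by exact_mod_cast mem_of_half h3 (-1))
  have hpos : 0 < poch (1 + 1 / 2 * p) i := poch_pos (by positivity) i
  have hc : (m.factorial : ℚ) = m.choose i * i.factorial * (m - i).factorial := by
    exact_mod_cast (Nat.choose_mul_factorial_mul_factorial hi).symm
  have e1 : poch (1 / 2) (2 * p + (m + i)) = poch (1 / 2) (2 * p + m) * poch (5 / 2 * p) i := by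
    rw [← add_assoc, poch_add]
    congr 2; push_cast; rw [hpq]; ring
  have e2 : poch (1 / 2) (m + i + 1) = poch (1 / 2) (m + 1) * poch (1 + 1 / 2 * p) i := by
    rw [show m + i + 1 = m + 1 + i by ring, poch_add]
    congr 2; push_cast; rw [hpq]; ring
  have e3 : (16 : ℚ) ^ p = 16 * (4 ^ m) ^ 4 := by
    rw [← pow_mul, show (16 : ℚ) = 4 ^ 2 by norm_num, ← pow_mul, ← pow_add]
    congr 1; omega
  have e4 : (-1 : ℚ) ^ (p + (m + i) + 1) = (-1) ^ m * (-1) ^ i := by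
    rw [hm, show 2 * m + 1 + (m + i) + 1 = 2 * (m + 1) + m + i by ring, pow_add, pow_add, pow_mul]
    simp
  have hs : (-1 : ℚ) ^ m * (-1) ^ m = 1 := by rw [← mul_pow]; norm_num
  unfold GG
  rw [e1, e2, e3, e4, poch_half_succ_m hm, poch_half_p hm, poch_half_2p_m hm,
    fact_p (p := p) (by omega), show p - (m + i + 1) = m - i by omega]
  have hf : ((p - 1).factorial : ℚ) ≠ 0 := by positivity
  have hf' : (m.factorial : ℚ) ≠ 0 := by positivity
  have hf2 : ((m - i).factorial : ℚ) ≠ 0 := by positivity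
  have hp0 : (p : ℚ) ≠ 0 := p_ne
  have h4 : (4 : ℚ) ^ m ≠ 0 := by positivity
  have hs0 : (-1 : ℚ) ^ m ≠ 0 := by positivity
  clear hpq
  generalize PP p m (-1 / 2) = P at *
  generalize PP p m (1 / 2) = P1 at *
  generalize PP p (p - 1) (1 / 2) = W1 at *
  generalize PP p (p - 1) (3 / 2) = W2 at *
  generalize poch (5 / 2 * p) i = A at *
  generalize poch (1 + 1 / 2 * p) i = B at *
  generalize ((p - 1).factorial : ℚ) = F at *
  generalize (4 : ℚ) ^ m = q at *
  generalize (-1 : ℚ) ^ m = s at *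
  generalize (-1 : ℚ) ^ i = t at *
  field_simp
  rw [hc]
  ring

lemma un_poch_one {c : ℚ} (hc : c ∈ Zl p) {i : ℕ} (hi : i < p) : Un p (poch (1 + c * p) i) := by
  rw [PP_poch, ← poch_one]
  refine Un.mul (Un.prod fun l hl => ?_) ((PP_cg_one hi hc).un one_ne_zero (by simp [Un]))
  have hl := mem_range.1 hl
  rw [add_comm]
  exact_mod_cast un_nat (p := p) (n := l + 1) (by omega) (by omega)

/-- Modulo `p²`, `((1 + p/2)_i)² ≡ i! (1 + p)_i`, and `(5p/2)_i` is divisible by `p` for `i > 0`; so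
modulo `p³` the sum is the Chu–Vandermonde sum with parameters `5p/2` and `1 + p`. -/
lemma upper_sum_cg (h3 : 3 ≤ p) {m : ℕ} (hm : p = 2 * m + 1) :
    Cg p 3 (∑ i ∈ range (m + 1), (-1) ^ i * (m.choose i : ℚ) * (i.factorial * poch (5 / 2 * p) i *
        (poch (1 + 1 / 2 * p) i ^ 2)⁻¹)) (PP p m (-3 / 2) * (PP p m 1)⁻¹) := by
  have hcv := chu_vandermonde m (5 / 2 * p) (1 + 1 * p) (by positivity)
  have e : (1 + 1 * p - 5 / 2 * p : ℚ) = 1 + -3 / 2 * p := by ring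
  have hf' : (m.factorial : ℚ) ≠ 0 := by positivity
  rw [e, PP_poch, PP_poch, mul_div_mul_left _ _ hf'] at hcv
  rw [← div_eq_mul_inv, ← hcv]
  refine Cg.sum fun i hi => ?_
  refine Cg.mul_left (mul_mem (neg_one_pow_mem i) (nat_mem _)) ?_
  have hi := mem_range.1 hi
  rcases i with _ | i
  · simpa [poch] using Cg.refl _ _
  have h2 : (1 / 2 : ℚ) ∈ Zl p := half_mem h3
  have hu1 : Un p (poch (1 + 1 / 2 * p) (i + 1)) := un_poch_one h2 (by omega)
  have hu2 : Un p (poch (1 + 1 * p) (i + 1)) := un_poch_one (one_mem _) (by omega)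
  have hu3 : Un p ((i + 1).factorial : ℚ) := by
    have := un_poch_one (p := p) (zero_mem _) (i := i + 1) (by omega)
    rwa [zero_mul, add_zero, poch_one] at this
  have hsq : Cg p 2 (poch (1 + 1 / 2 * p) (i + 1) ^ 2)
      ((i + 1).factorial * poch (1 + 1 * p) (i + 1)) := by
    rw [← poch_one, poch, poch, poch, ← prod_pow, ← prod_mul_distrib]
    refine Cg.prod (fun l _ => ⟨1 / 2 * (1 / 2), mul_mem h2 h2, by ring⟩) fun l _ => ?_
    exact mul_mem (add_mem (one_mem _) (nat_mem _))
      (add_mem (add_mem (one_mem _) (mul_mem (one_mem _) (nat_mem _))) (nat_mem _))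
  have h4 := (hsq.inv (hu1.pow 2) (hu3.mul hu2)).p_mul 1
  have hA : poch (5 / 2 * p) (i + 1) = p * (5 / 2 * poch (1 + 5 / 2 * p) i) := by
    rw [poch_succ', add_comm _ (1 : ℚ)]; ring
  have h52 : (5 / 2 : ℚ) ∈ Zl p := by simpa using mem_of_half h3 5
  have hB : (5 / 2 * poch (1 + 5 / 2 * p) i) ∈ Zl p :=
    mul_mem h52 (un_poch_one h52 (by omega)).mem
  have h6 := Cg.mul_left (mul_mem hu3.mem hB) h4
  have := hu3.ne
  have := hu2.ne
  have := hu1.ne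
  convert h6 using 1
  · rw [hA]; ring
  · rw [hA]
    generalize poch (1 + 5 / 2 * p) i = X
    generalize poch (1 + 1 * p) (i + 1) = Y at *
    field_simp

lemma upper_cg (h5 : 5 ≤ p) {m : ℕ} (hm : p = 2 * m + 1) :
    Cg p 4 (∑ i ∈ range (m + 1), GG p (m + i)) (3 * (-1) ^ m * p) := by
  have h3 : 3 ≤ p := by omega
  have hmem : ∀ k : ℤ, (k / 2 : ℚ) ∈ Zl p := mem_of_half h3
  have c1 : (1 / 2 : ℚ) ∈ Zl p := half_mem h3
  have c3 : (3 / 2 : ℚ) ∈ Zl p := by simpa using hmem 3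
  have d1 : (-1 / 2 : ℚ) ∈ Zl p := by exact_mod_cast hmem (-1)
  have d3 : (-3 / 2 : ℚ) ∈ Zl p := by exact_mod_cast hmem (-3)
  have m1 : (-1 : ℚ) ∈ Zl p := neg_mem (one_mem _)
  rw [sum_congr rfl fun i hi => GG_upper h3 hm (Nat.lt_succ_iff.1 (mem_range.1 hi)), ← mul_sum]
  set S := ∑ i ∈ range (m + 1), (-1) ^ i * (m.choose i : ℚ) * (i.factorial * poch (5 / 2 * p) i *
        (poch (1 + 1 / 2 * p) i ^ 2)⁻¹)
  -- it remains to see that the cofactor of `3 p (-1)^m` is `1` modulo `p³`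
  suffices h : Cg p 3 ((((4 ^ m) ^ 4)⁻¹ * PP p m (1 / 2) *
      PP p (p - 1) (1 / 2) * PP p (p - 1) (3 / 2)) * S) 1 by
    have h' := (Cg.mul_left (mul_mem (nat_mem 3) (neg_one_pow_mem m)) h).p_mul 1
    convert h' using 1
    · push_cast; ring
    · push_cast; ring
  have hq : (4 : ℚ) ^ m = PP p m (-1) * (PP p m (-1 / 2))⁻¹ := by
    rw [← four_pow_PP hm, mul_inv_cancel_right₀ (PP_ne hm d1)]
  have hP1 := PP_un (p := p) hm (one_mem _)
  have hPm1 := PP_un (p := p) hm m1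
  have hPmh := PP_un (p := p) hm d1
  have hPh := PP_un (p := p) hm c1
  have hP32 := PP_un (p := p) hm d3
  have hW1 := W_cg (p := p) h5 c1
  have hW2 := W_cg (p := p) h5 c3
  have hqu : Un p ((4 : ℚ) ^ m) := by rw [hq]; exact hPm1.mul hPmh.inv
  have s1 : Cg p 3 (PP p (p - 1) (1 / 2) * PP p (p - 1) (3 / 2) * S)
      (1 * 1 * (PP p m (-3 / 2) * (PP p m 1)⁻¹)) := by
    have hm' := (hP32.mul hP1.inv).mem
    refine (hW1.mul hW2 (hW1.mem (one_mem _)) (one_mem _)).mul (upper_sum_cg h3 hm) ?_ hm'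
    exact mul_mem (hW1.mem (one_mem _)) (hW2.mem (one_mem _))
  -- the cofactor is `exp (p H_m * c)` with total exponent `c = 0`
  have key : Cg p 3 (PP p m (1 / 2) * PP p m (-3 / 2) * PP p m (-1 / 2) ^ 4)
      (PP p m (-1) ^ 4 * PP p m 1) := by
    have em : ∀ {a : ℚ}, a ∈ Zl p → ∀ {x y b : ℚ}, b ∈ Zl p → x = PP p m a → Cg p 3 y (ee p m b) →
        Cg p 3 (x * y) (ee p m (a + b)) := by
      intro a ha x y b hb hx hy
      rw [hx]
      exact ((PP_cg h5 hm ha).mul hy (PP_un hm ha).mem (ee_mem h3 hm hb)).trans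
        (ee_mul h3 hm ha hb)
    have p2 : ∀ {a : ℚ}, a ∈ Zl p → Cg p 3 (PP p m a ^ 4) (ee p m (a + (a + (a + a)))) := by
      intro a ha
      have := em ha (add_mem ha (add_mem ha ha)) rfl
        (em ha (add_mem ha ha) rfl (em ha ha rfl (PP_cg h5 hm ha)))
      convert this using 1
      ring
    have m2 : ∀ {a : ℚ}, a ∈ Zl p → (a + (a + (a + a))) ∈ Zl p := fun ha =>
      add_mem ha (add_mem ha (add_mem ha ha))
    have hl := em c1 (add_mem d3 (m2 d1)) rfl (em d3 (m2 d1) rfl (p2 d1))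
    have hr := em (one_mem _) (m2 m1) rfl (p2 m1)
    rw [mul_assoc, mul_comm (PP p m (-1) ^ 4)]
    refine hl.trans ?_
    convert hr.symm using 2
    norm_num
  have hfin := Cg.mul_left ((hqu.pow 4).inv.mul hPh).mem s1
  rw [show ((4 ^ m) ^ 4)⁻¹ * PP p m (1 / 2) * PP p (p - 1) (1 / 2) * PP p (p - 1) (3 / 2) * S =
    ((4 ^ m) ^ 4)⁻¹ * PP p m (1 / 2) * (PP p (p - 1) (1 / 2) * PP p (p - 1) (3 / 2) * S) by ring]
  refine hfin.trans ?_
  refine Cg.cancel ((hPm1.pow 4).mul hP1) ?_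
  have n1 := hP1.ne
  have n2 := hPm1.ne
  have n3 := hPmh.ne
  convert key using 1
  · rw [hq]
    field_simp
  · ring

/-! ### The terms `G(p, j+1)` with `j < m` -/

lemma un_poch_half (h3 : 3 ≤ p) {m : ℕ} (hm : p = 2 * m + 1) {j : ℕ} (hj : j ≤ m) :
    Un p (poch (1 / 2) j) := by
  refine Un.prod fun i hi => ?_
  have hi := mem_range.1 hi
  rw [show (1 / 2 + i : ℚ) = ((2 * i + 1 : ℕ) : ℚ) * 2⁻¹ by push_cast; ring]
  exact (un_nat (by omega) (by omega)).mul (two_un h3).inv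

lemma GG_lower (h3 : 3 ≤ p) {m : ℕ} (hm : p = 2 * m + 1) {j : ℕ} (hj : j < m) :
    GG p j = (p : ℚ) ^ 3 * ((3 * (1 / 2) * (1 / 2) * (-1) ^ j) * ((((PP p m (-1)) ^ 6)⁻¹ *
      (PP p m (-1 / 2) ^ 6 * (PP p m (1 / 2) * (PP p m (3 / 2) * PP p (p - 1) (1 / 2))))) *
      (poch (1 / 2 + 2 * p) j * (∏ i ∈ range j, ((p : ℚ) - (i + 1))) *
        (poch (1 / 2) (j + 1) ^ 2)⁻¹))) := by
  have hP : PP p m (-1 / 2) ≠ 0 := PP_ne hm (by exact_mod_cast mem_of_half h3 (-1))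
  have hP' : PP p m (-1) ≠ 0 := PP_ne hm (neg_mem (one_mem _))
  have hpos : 0 < poch (1 / 2) (j + 1) := poch_pos (by norm_num) _
  have e1 : poch (1 / 2) (2 * p + j) = poch (1 / 2) (2 * p) * poch (1 / 2 + 2 * p) j := by
    rw [poch_add]; push_cast; rfl
  have hq : (4 : ℚ) ^ m = PP p m (-1) * (PP p m (-1 / 2))⁻¹ := by
    rw [← four_pow_PP hm, mul_inv_cancel_right₀ hP]
  have e3 : (16 : ℚ) ^ p = 16 * (PP p m (-1) * (PP p m (-1 / 2))⁻¹) ^ 4 := by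
    rw [← hq, ← pow_mul, show (16 : ℚ) = 4 ^ 2 by norm_num, ← pow_mul, ← pow_add]
    congr 1; omega
  have e4 : (-1 : ℚ) ^ (p + j + 1) = (-1) ^ j := by
    rw [hm, show 2 * m + 1 + j + 1 = 2 * (m + 1) + j by ring, pow_add, pow_mul]
    simp
  have hs : (-1 : ℚ) ^ m * (-1) ^ m = 1 := by rw [← mul_pow]; norm_num
  have hd := desc_fact (p - 1) j (by omega)
  rw [show p - 1 + 1 = p by omega] at hd
  have hf0 := fact_p_sub_one hm
  unfold GG
  rw [e1, e3, e4, poch_half_p hm, poch_half_2p hm,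
    fact_p (p := p) (by omega), show p - (j + 1) = p - 1 - j by omega]
  have hf : ((p - 1).factorial : ℚ) ≠ 0 := by positivity
  have hf' : (m.factorial : ℚ) ≠ 0 := by positivity
  have hf2 : ((p - 1 - j).factorial : ℚ) ≠ 0 := by positivity
  have hp0 : (p : ℚ) ≠ 0 := p_ne
  have hs0 : (-1 : ℚ) ^ m ≠ 0 := by positivity
  have hpr : ∏ i ∈ range j, ((p : ℚ) - (i + 1)) =
      (p - 1).factorial * ((p - 1 - j).factorial : ℚ)⁻¹ := by rw [hd]; field_simp
  rw [hpr, hf0]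
  clear hd hpr hf0 e3 hq e1 e4
  generalize PP p m (-1 / 2) = P at *
  generalize PP p m (1 / 2) = P1 at *
  generalize PP p m (-1) = P2 at *
  generalize PP p m (3 / 2) = P3 at *
  generalize PP p (p - 1) (1 / 2) = W1 at *
  generalize poch (1 / 2 + 2 * p) j = A at *
  generalize poch (1 / 2) (j + 1) = B at *
  generalize ((p - 1 - j).factorial : ℚ) = F at *
  generalize (-1 : ℚ) ^ m = s at *
  generalize (-1 : ℚ) ^ j = t at *
  field_simp
  try ring

lemma GG_lower_cg (h3 : 3 ≤ p) {m : ℕ} (hm : p = 2 * m + 1) {j : ℕ} (hj : j < m) :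
    Cg p 4 (GG p j) ((p : ℚ) ^ 3 * ((3 * (1 / 2) * (1 / 2)) *
      (j.factorial * poch (1 / 2) j * (poch (1 / 2) (j + 1) ^ 2)⁻¹))) := by
  have hmem : ∀ k : ℤ, (k / 2 : ℚ) ∈ Zl p := mem_of_half h3
  have c1 : (1 / 2 : ℚ) ∈ Zl p := half_mem h3
  have c3 : (3 / 2 : ℚ) ∈ Zl p := by simpa using hmem 3
  have d1 : (-1 / 2 : ℚ) ∈ Zl p := by exact_mod_cast hmem (-1)
  have m1 : (-1 : ℚ) ∈ Zl p := neg_mem (one_mem _)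
  have hu : Un p (poch (1 / 2) (j + 1)) := un_poch_half h3 hm (by omega)
  have hu' : Un p (poch (1 / 2) j) := un_poch_half h3 hm (by omega)
  have hmp : m < p := by omega
  have one_un : Un p 1 := by simp [Un]
  rw [GG_lower h3 hm hj]
  show Cg p (3 + 1) _ _
  refine Cg.p_mul 3 ?_
  have k1 : Cg p 1 (((PP p m (-1)) ^ 6)⁻¹ *
      (PP p m (-1 / 2) ^ 6 * (PP p m (1 / 2) * (PP p m (3 / 2) * PP p (p - 1) (1 / 2))))) 1 := by
    have mulone : ∀ {x y : ℚ}, Cg p 1 x 1 → Cg p 1 y 1 → Cg p 1 (x * y) 1 := by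
      intro x y hx hy
      have := hx.mul hy (hx.mem (one_mem _)) (one_mem _)
      rwa [one_mul] at this
    have powone : ∀ {x : ℚ} (n : ℕ), Cg p 1 x 1 → Cg p 1 (x ^ n) 1 := by
      intro x n hx
      simpa using hx.pow (one_mem _) n
    have a1 := powone 6 (PP_cg_one (p := p) hmp m1)
    refine mulone ?_ (mulone (powone 6 (PP_cg_one hmp d1)) (mulone (PP_cg_one hmp c1)
      (mulone (PP_cg_one hmp c3) (PP_cg_one (by omega) c1))))
    have := a1.inv (a1.un one_ne_zero one_un) one_un
    rwa [inv_one] at this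
  have k2 : Cg p 1 (poch (1 / 2 + 2 * p) j) (poch (1 / 2) j) := by
    refine Cg.prod (fun i _ => ⟨2, nat_mem 2, by ring⟩) fun i _ => add_mem c1 (nat_mem _)
  have k3 : Cg p 1 (∏ i ∈ range j, ((p : ℚ) - (i + 1))) ((-1) ^ j * j.factorial) := by
    have : (-1 : ℚ) ^ j * j.factorial = ∏ i ∈ range j, (-1) * (1 + (i : ℚ)) := by
      rw [prod_mul_distrib, prod_const, card_range, ← poch_one]; rfl
    rw [this]
    refine Cg.prod (fun i _ => ⟨1, one_mem _, by ring⟩) fun i _ =>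
      mul_mem m1 (add_mem (one_mem _) (nat_mem _))
  have k4 := (k2.mul k3 (k2.mem hu'.mem) (mul_mem (neg_one_pow_mem j) (nat_mem _))).mul
    (Cg.refl 1 (poch (1 / 2) (j + 1) ^ 2)⁻¹)
    (mul_mem (k2.mem hu'.mem) (k3.mem (mul_mem (neg_one_pow_mem j) (nat_mem _))))
    (hu.pow 2).inv.mem
  have k5 := k1.mul k4 (k1.mem (one_mem _)) (mul_mem (mul_mem hu'.mem
    (mul_mem (neg_one_pow_mem j) (nat_mem _))) (hu.pow 2).inv.mem)
  have k6 := Cg.mul_left (mul_mem (mul_mem (mul_mem (nat_mem 3) c1) c1) (neg_one_pow_mem j)) k5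
  have hs : (-1 : ℚ) ^ j * (-1) ^ j = 1 := by rw [← mul_pow]; norm_num
  convert k6 using 1
  · push_cast; ring
  push_cast
  linear_combination -(3 * (1 / 2) * (1 / 2) * (j.factorial * poch (1 / 2) j *
    (poch (1 / 2) (j + 1) ^ 2)⁻¹)) * hs

/-- Modulo `p`, `1/2 ≡ -m`, which turns the lower sum into an alternating sum of reciprocal binomial
coefficients. -/
lemma lower_term_cg (h3 : 3 ≤ p) {M : ℕ} (hm : p = 2 * (M + 1) + 1) {i : ℕ} (hi : i ≤ M) :
    Cg p 1 ((M - i).factorial * poch (1 / 2) (M - i) * (poch (1 / 2) (M - i + 1) ^ 2)⁻¹)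
      ((-1) ^ M * ((-1) ^ i * (i.factorial * (M - i).factorial) /
        ((i + 1) * (M + 1).factorial))) := by
  obtain ⟨j, rfl⟩ := Nat.exists_eq_add_of_le' hi
  rw [Nat.add_sub_cancel]
  have hpq : (p : ℚ) = 2 * (j + i + 1) + 1 := by exact_mod_cast hm
  have c1 : (1 / 2 : ℚ) ∈ Zl p := half_mem h3
  have hu : Un p (poch (1 / 2) (j + 1)) := un_poch_half h3 hm (by omega)
  have hu' : Un p (poch (1 / 2) j) := un_poch_half h3 hm (by omega)
  have hui : Un p ((i : ℚ) + 1) := un_succ hm (by omega)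
  have hj2 : poch (1 / 2) (j + 1) = poch (1 / 2) j * (1 / 2 + j) := poch_succ _ _
  have huj : Un p (1 / 2 + j : ℚ) := by
    have := hu.mul hu'.inv
    rw [hj2] at this
    rwa [mul_comm, ← mul_assoc, inv_mul_cancel₀ hu'.ne, one_mul] at this
  have a1 : Cg p 1 (1 / 2 + j : ℚ) (-1 * ((i : ℚ) + 1)) := by
    refine ⟨1 / 2, c1, ?_⟩
    rw [hpq]; ring
  have hd := desc_fact (j + i + 1) (j + 1) (by omega)
  rw [show j + i + 1 - (j + 1) = i by omega] at hd
  have a2 : Cg p 1 (poch (1 / 2) (j + 1))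
      ((-1) ^ (j + 1) * ∏ l ∈ range (j + 1), (((j + i + 1 + 1 : ℕ) : ℚ) - (l + 1))) := by
    have : (-1 : ℚ) ^ (j + 1) * ∏ l ∈ range (j + 1), (((j + i + 1 + 1 : ℕ) : ℚ) - (l + 1)) =
        ∏ l ∈ range (j + 1), (-1) * (((j + i + 1 + 1 : ℕ) : ℚ) - (l + 1)) := by
      rw [prod_mul_distrib, prod_const, card_range]
    rw [this]
    refine Cg.prod (fun l _ => ⟨1 / 2, c1, ?_⟩) fun l _ => mul_mem (neg_mem (one_mem _))
      (sub_mem (nat_mem _) (add_mem (nat_mem _) (one_mem _)))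
    rw [hpq]; push_cast; ring
  have one_un : Un p (-1 : ℚ) := by simp [Un]
  have b1 := a1.inv huj (one_un.mul hui)
  have b2 := a2.inv hu (a2.symm.un one_ne_zero hu)
  have b3 := Cg.mul_left (nat_mem j.factorial) (b1.mul b2 huj.inv.mem
    (a2.symm.un one_ne_zero hu).inv.mem)
  have hf : (i.factorial : ℚ) ≠ 0 := by positivity
  have hpr : ∏ l ∈ range (j + 1), (((j + i + 1 + 1 : ℕ) : ℚ) - (l + 1)) =
    (j + i + 1).factorial * (i.factorial : ℚ)⁻¹ := by rw [hd]; field_simp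
  rw [hpr] at b3
  have hs : (-1 : ℚ) ^ i * (-1) ^ i = 1 := by rw [← mul_pow]; norm_num
  have hsj : (-1 : ℚ) ^ j * (-1) ^ j = 1 := by rw [← mul_pow]; norm_num
  have n1 := huj.ne
  have n2 := hu'.ne
  have n3 := hui.ne
  have hf2 : ((j + i + 1).factorial : ℚ) ≠ 0 := by positivity
  convert b3 using 1
  · rw [hj2]
    generalize poch (1 / 2) j = A at *
    generalize (1 / 2 + j : ℚ) = B at *
    field_simp
  · rw [pow_add, pow_succ]
    have hsj0 : (-1 : ℚ) ^ j ≠ 0 := by positivity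
    generalize (-1 : ℚ) ^ i = s at *
    generalize (-1 : ℚ) ^ j = t at *
    field_simp
    linear_combination t ^ 2 * hs + hsj

lemma lower_cg (h5 : 5 ≤ p) {m : ℕ} (hm : p = 2 * m + 1) {E : ℕ → ℤ} (hE0 : E 0 = 1)
    (hE : ∀ n : ℕ, 1 ≤ n → (∑ k ∈ range (n + 1),
      if 2 ∣ k then (n.choose k : ℤ) * E (n - k) else 0) = 0) :
    Cg p 4 (∑ j ∈ range m, GG p j) (3 * (p : ℚ) ^ 3 * E (p - 3)) := by
  have h3 : 3 ≤ p := by omega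
  have c1 : (1 / 2 : ℚ) ∈ Zl p := half_mem h3
  obtain ⟨M, rfl⟩ : ∃ M, m = M + 1 := ⟨m - 1, by omega⟩
  refine (Cg.sum fun j hj => GG_lower_cg h3 hm (mem_range.1 hj)).trans ?_
  rw [← mul_sum, ← mul_sum]
  have h1 : Cg p 1 (∑ j ∈ range (M + 1), (j.factorial * poch (1 / 2) j *
      (poch (1 / 2) (j + 1) ^ 2)⁻¹)) ((-1) ^ M * cc M) := by
    rw [← sum_range_reflect, cc, mul_sum]
    exact Cg.sum fun i hi => lower_term_cg h3 hm (Nat.lt_succ_iff.1 (mem_range.1 hi))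
  have h2 : Cg p 1 (cc M) (-2 * (2 * (-1) ^ (M + 1) * E (p - 3)) + -1 * 0) := by
    rw [cc_eq, sub_eq_add_neg, ← neg_one_mul (∑ i ∈ range (M + 1), 1 / ((i : ℚ) + 1) ^ 2)]
    exact (Cg.mul_left (neg_mem (nat_mem 2)) (euler_cg h5 hm hE0 hE)).add
      (Cg.mul_left (neg_mem (one_mem _)) (H2_half h5 hm))
  have h4 := (Cg.mul_left (mul_mem (mul_mem (nat_mem 3) c1) c1)
    (h1.trans (Cg.mul_left (neg_one_pow_mem M) h2))).p_mul 3
  have hs : (-1 : ℚ) ^ M * (-1) ^ M = 1 := by rw [← mul_pow]; norm_num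
  convert h4 using 1
  · push_cast; ring
  rw [pow_succ]
  push_cast
  linear_combination -3 * (p : ℚ) ^ 3 * E (p - 3) * hs

end Sun

/-- For an odd prime `p`,
`∑_{k=0}^{p-1} (20k+3)/(-2^10)^k · (4k)!/(k!)^4 ≡ 3·(-1)^((p-1)/2)·p + 3·p^3·E_{p-3} (mod p^4)`,
where `E` is the sequence of Euler numbers, characterized by `E 0 = 1` and
`∑_{k ≤ n, 2 ∣ k} C(n,k) E_{n-k} = 0` for `n ≥ 1`. -/
theorem sun_full_sum_20k3 (p : ℕ) (hp : p.Prime) (hodd : Odd p)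
    (E : ℕ → ℤ) (hE0 : E 0 = 1)
    (hE : ∀ n : ℕ, 1 ≤ n →
      (∑ k ∈ Finset.range (n + 1),
        if 2 ∣ k then (n.choose k : ℤ) * E (n - k) else 0) = 0) :
    padicNorm p ((∑ k ∈ Finset.range p,
        (20 * k + 3 : ℚ) / (-2 ^ 10 : ℚ) ^ k *
          ((Nat.factorial (4 * k) : ℚ) / (Nat.factorial k : ℚ) ^ 4)) -
      (3 * (-1) ^ ((p - 1) / 2) * (p : ℚ) + 3 * (p : ℚ) ^ 3 * (E (p - 3) : ℚ))) ≤
      (p : ℚ) ^ (-4 : ℤ) := by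
  have : Fact p.Prime := ⟨hp⟩
  obtain ⟨m, hm⟩ := hodd
  refine Sun.Cg.padicNorm_le (k := 4) ?_
  rcases Nat.lt_or_ge p 5 with h | h5
  · have h3 : p = 3 := by have := hp.two_le; omega
    subst h3
    refine ⟨((-112359 : ℤ) : ℚ) * (1 / 2) ^ 17,
      mul_mem (intCast_mem _ _) (pow_mem (Sun.half_mem le_rfl) 17), ?_⟩
    simp only [Nat.sub_self, hE0]
    norm_num [Finset.sum_range_succ, Nat.factorial]
  · rw [← Finset.sum_congr rfl fun k _ => Sun.FF_zero k, Sun.wz_sum]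
    have e : ∑ j ∈ Finset.range p, Sun.GG p j =
        ∑ i ∈ Finset.range (m + 1), Sun.GG p (m + i) + ∑ j ∈ Finset.range m, Sun.GG p j := by
      conv_lhs => rw [show Finset.range p = Finset.range (m + (m + 1)) by congr 1; omega]
      rw [Finset.sum_range_add, add_comm]
    rw [e, show (p - 1) / 2 = m by omega]
    exact (Sun.upper_cg h5 hm).add (Sun.lower_cg h5 hm hE0 hE)
end

section
/- Let p be an odd prime. Then ∑_{k=1}^{(p-1)/2} 4^k/((2k−1)·C(2k,k)) ≡ E_{p-3} − 1 + (-1)^((p-1)/2) (mod p), as a congruence of rational numbers with p-integral denominators. -/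
/-!
Write `p = 2m + 1` and work in `ZMod p`, where `2m = -1`; the prime `p = 3` is checked by hand.

* `C(2k,k) = (-4)^k C(m,k)` in `ZMod p`, so after `k ↦ m - k` the sum becomes, up to the factor
  `-(-1)^m / 2`, the sum `∑_{k<m} (-1)^k / ((k+1) C(m,k))`.
* In any field where the denominators do not vanish (`sum_inv_succ_mul_choose`),
  `∑_{k≤n} (-1)^k / ((k+1) C(n,k)) = -(n+1) ∑_{j=1}^{n+1} (1 + 2(-1)^j) / j²`,
  by induction on `n`, the increment being the telescoping sum `∑_{k≤n} (-1)^k / C(n,k)`.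
* `∑_{j=1}^m 1/j² = 0` in `ZMod p` for `p > 3`, since power sums over a finite field vanish.
* `∑_{j=1}^m (-1)^j / j² = 2 (-1)^m E_{p-3}`. This is the umbral property of Euler numbers: the linear
  functional `L` with `L(X^n) = E_n` satisfies `L(f(X+1) + f(X-1)) = 2 f(0)`, hence
  `P(a) = L((X+a)^n)` satisfies `P(a+1) + P(a-1) = 2 a^n`. Summing with alternating signs over
  `a = 2, 4, …, 2m` for `n = p - 3` gives the claim, as `P(1) = 0` and `P(2m+1) = P(0) = E_n`.
-/

open Finset Polynomial

/-! ### Alternating sums of reciprocals of binomial coefficients -/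

section Reciprocals

variable {K : Type*} [Field K]

/-- The terms telescope, since
`1 / C(n,k) = (n+1)/(n+2) * (1 / C(n+1,k) + 1 / C(n+1,k+1))`. -/
lemma sum_alternating_inv_choose (n : ℕ) (h2 : ((n : K) + 2) ≠ 0)
    (h : ∀ k ≤ n + 1, ((n + 1).choose k : K) ≠ 0) (h' : ∀ k ≤ n, (n.choose k : K) ≠ 0) :
    ∑ k ∈ range (n + 1), (-1 : K) ^ k / (n.choose k : K)
      = (1 + (-1) ^ n) * (n + 1) / (n + 2) := by
  have key : ∀ k ∈ range (n + 1), (-1 : K) ^ k / (n.choose k : K)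
      = (n + 1) / (n + 2) * ((-1 : K) ^ k / ((n + 1).choose k : K)
        - (-1 : K) ^ (k + 1) / ((n + 1).choose (k + 1) : K)) := by
    intro k hk
    have hk : k ≤ n := by simpa [Nat.lt_succ_iff] using hk
    have a1 := h k (by omega)
    have a2 := h (k + 1) (by omega)
    have a3 := h' k hk
    have e1 : ((n : K) + 1) * n.choose k = (n + 1).choose (k + 1) * (k + 1) := by
      exact_mod_cast congrArg (Nat.cast (R := K)) (Nat.add_one_mul_choose_eq n k)
    have e2 : ((n : K) + 1) * n.choose k = (n + 1).choose k * (n + 1 - k) := by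
      have := Nat.choose_mul_succ_eq n k
      have hc : ((n + 1 - k : ℕ) : K) = n + 1 - k := by
        rw [Nat.cast_sub (by omega)]; push_cast; ring
      rw [← hc]
      have := congrArg (Nat.cast (R := K)) this
      push_cast at this ⊢
      rw [← this]; ring
    rw [pow_succ]
    field_simp
    linear_combination (-((n + 1).choose k : K)) * e1 - ((n + 1).choose (k + 1) : K) * e2
  rw [sum_congr rfl key, ← mul_sum, sum_range_sub']
  simp
  rw [pow_succ]
  ring

lemma sum_inv_succ_mul_choose (n : ℕ)
    (h : ∀ i ≤ n, ∀ k ≤ i, (i.choose k : K) ≠ 0)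
    (h1 : ∀ i ≤ n, ((i : K) + 1) ≠ 0) :
    ∑ k ∈ range (n + 1), (-1 : K) ^ k / (((k : K) + 1) * n.choose k)
      = -(n + 1) * ∑ j ∈ range (n + 1), (1 + 2 * (-1 : K) ^ (j + 1)) / ((j : K) + 1) ^ 2 := by
  induction n with
  | zero => norm_num
  | succ n ih =>
    have ih := ih (fun i hi => h i (by omega)) (fun i hi => h1 i (by omega))
    have n1 := h1 n (by omega)
    have n2 : (n : K) + 2 ≠ 0 := by
      have := h1 (n + 1) le_rfl
      push_cast at this
      intro h0; apply this; linear_combination h0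
    have hT := sum_alternating_inv_choose n n2 (h (n + 1) le_rfl) (h n (by omega))
    have key : ∀ k ∈ range (n + 1), (-1 : K) ^ k / (((k : K) + 1) * (n + 1).choose k)
        = (n + 2) / (n + 1) * ((-1 : K) ^ k / (((k : K) + 1) * n.choose k))
          - 1 / (n + 1) * ((-1 : K) ^ k / (n.choose k : K)) := by
      intro k hk
      have hk : k ≤ n := by simpa [Nat.lt_succ_iff] using hk
      have a1 := h (n + 1) le_rfl k (by omega)
      have a3 := h n (by omega) k hk
      have a4 := h1 k (by omega)
      have e2 : ((n : K) + 1) * n.choose k = (n + 1).choose k * (n + 1 - k) := by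
        have := Nat.choose_mul_succ_eq n k
        have hc : ((n + 1 - k : ℕ) : K) = n + 1 - k := by
          rw [Nat.cast_sub (by omega)]; push_cast; ring
        rw [← hc]
        have := congrArg (Nat.cast (R := K)) this
        push_cast at this ⊢
        rw [← this]; ring
      field_simp
      linear_combination e2
    rw [sum_range_succ, sum_congr rfl key, sum_sub_distrib, ← mul_sum, ← mul_sum, ih, hT,
      sum_range_succ _ (n + 1), Nat.choose_self]
    have n2' : (n : K) + 1 + 1 ≠ 0 := by
      intro h0; apply n2; linear_combination h0
    push_cast
    have e : (n : K) + 1 + 1 = n + 2 := by ring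
    rw [e]
    simp only [pow_succ]
    field_simp
    ring

end Reciprocals

/-! ### Euler numbers as an umbral functional -/

section Euler

variable {E : ℕ → ℤ}

lemma euler_odd_eq_zero
    (hE : ∀ n : ℕ, 1 ≤ n →
      (∑ k ∈ range (n + 1), if 2 ∣ k then (n.choose k : ℤ) * E (n - k) else 0) = 0)
    (n : ℕ) (hn : Odd n) : E n = 0 := by
  induction n using Nat.strong_induction_on with
  | _ n ih =>
    have h := hE n hn.pos
    rw [sum_range_succ', sum_eq_zero] at h
    · simpa using h
    · intro k hk
      have hk := mem_range.1 hk
      split_ifs with h2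
      · rw [ih (n - (k + 1)) (by omega), mul_zero]
        rcases hn with ⟨a, rfl⟩
        obtain ⟨b, hb⟩ := h2
        exact ⟨a - b, by omega⟩
      · rfl

/-- The linear functional on polynomials sending `X ^ n` to the `n`-th Euler number. -/
noncomputable def eulerFunctional (K : Type*) [Field K] (E : ℕ → ℤ) : K[X] →ₗ[K] K :=
  Polynomial.lsum fun n => (E n : K) • LinearMap.id

variable {K : Type*} [Field K]

lemma eulerFunctional_X_pow (n : ℕ) : eulerFunctional K E (X ^ n) = E n := by
  rw [eulerFunctional, Polynomial.lsum_apply, ← monomial_one_right_eq_X_pow,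
    Polynomial.sum_monomial_index]
  · simp
  · simp

lemma eulerFunctional_shift_pow (hE0 : E 0 = 1)
    (hE : ∀ n : ℕ, 1 ≤ n →
      (∑ k ∈ range (n + 1), if 2 ∣ k then (n.choose k : ℤ) * E (n - k) else 0) = 0) (n : ℕ) :
    eulerFunctional K E ((X + 1) ^ n + (X - 1) ^ n) = 2 * 0 ^ n := by
  have e : ((X : K[X]) + 1) ^ n + (X - 1) ^ n
      = ∑ k ∈ range (n + 1), (if 2 ∣ k then 2 * (n.choose k : K) else 0) • X ^ (n - k) := by
    rw [sub_eq_add_neg, add_comm X 1, add_comm X (-1), add_pow, add_pow, ← sum_add_distrib]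
    refine sum_congr rfl fun k _ => ?_
    split_ifs with h
    · rw [(even_iff_two_dvd.2 h).neg_one_pow, smul_eq_C_mul]
      rw [C_mul, C_ofNat]
      simp
      ring
    · rw [(Nat.not_even_iff_odd.1 (mt even_iff_two_dvd.1 h)).neg_one_pow]
      simp
  rw [e, map_sum]
  simp only [map_smul, eulerFunctional_X_pow, smul_eq_mul]
  rcases Nat.eq_zero_or_pos n with rfl | hn
  · simp [hE0]
  · have h := congrArg (Int.cast (R := K)) (hE n hn)
    push_cast at h
    rw [zero_pow hn.ne']
    conv_rhs => rw [← h, mul_sum]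
    refine sum_congr rfl fun k _ => ?_
    split_ifs <;> ring

lemma eulerFunctional_comp (hE0 : E 0 = 1)
    (hE : ∀ n : ℕ, 1 ≤ n →
      (∑ k ∈ range (n + 1), if 2 ∣ k then (n.choose k : ℤ) * E (n - k) else 0) = 0) (f : K[X]) :
    eulerFunctional K E (f.comp (X + 1) + f.comp (X - 1)) = 2 * f.eval 0 := by
  induction f using Polynomial.induction_on' with
  | add f g hf hg =>
    rw [add_comp, add_comp, eval_add, mul_add, ← hf, ← hg, ← map_add]
    congr 1
    ring
  | monomial n a =>
    have := eulerFunctional_shift_pow (K := K) hE0 hE n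
    rw [monomial_comp, monomial_comp, ← mul_add, ← smul_eq_C_mul, map_smul, this, eval_monomial,
      smul_eq_mul]
    ring

/-- The value `L((X + a)^n)` of the Euler functional, i.e. the Euler polynomial
`2^n E_n((a + 1) / 2)`. -/
noncomputable def eulerShift (E : ℕ → ℤ) (n : ℕ) (a : K) : K :=
  eulerFunctional K E ((X + C a) ^ n)

lemma eulerShift_add (hE0 : E 0 = 1)
    (hE : ∀ n : ℕ, 1 ≤ n →
      (∑ k ∈ range (n + 1), if 2 ∣ k then (n.choose k : ℤ) * E (n - k) else 0) = 0)
    (n : ℕ) (a : K) :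
    eulerShift E n (a + 1) + eulerShift E n (a - 1) = 2 * a ^ n := by
  have h := eulerFunctional_comp hE0 hE ((X + C a) ^ n)
  rw [eulerShift, eulerShift, ← map_add]
  simp only [pow_comp, add_comp, X_comp, C_comp, eval_pow, eval_add, eval_X, eval_C,
    zero_add] at h
  rw [← h, C_add, C_sub, C_1]
  congr 3 <;> ring

lemma eulerShift_zero (n : ℕ) : eulerShift E n (0 : K) = E n := by
  simp [eulerShift, eulerFunctional_X_pow]

lemma eulerShift_one
    (hE : ∀ n : ℕ, 1 ≤ n →
      (∑ k ∈ range (n + 1), if 2 ∣ k then (n.choose k : ℤ) * E (n - k) else 0) = 0)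
    (n : ℕ) (hn : 1 ≤ n) (he : Even n) : eulerShift E n (1 : K) = 0 := by
  have h := congrArg (Int.cast (R := K)) (hE n hn)
  rw [eulerShift, C_1, add_comm X 1, add_pow, map_sum]
  rw [← Int.cast_zero, ← h, Int.cast_sum]
  refine sum_congr rfl fun k hk => ?_
  have e : (1 : K[X]) ^ k * X ^ (n - k) * (n.choose k : K[X])
      = (n.choose k : K) • X ^ (n - k) := by
    rw [smul_eq_C_mul]; simp; ring
  rw [e, map_smul, eulerFunctional_X_pow, smul_eq_mul]
  split_ifs with h2
  · push_cast; rfl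
  · rw [euler_odd_eq_zero hE (n - k)]
    · simp
    · have hk := mem_range.1 hk
      rw [Nat.odd_iff]
      rcases he with ⟨b, rfl⟩
      omega

lemma eulerShift_alternating_sum (hE0 : E 0 = 1)
    (hE : ∀ n : ℕ, 1 ≤ n →
      (∑ k ∈ range (n + 1), if 2 ∣ k then (n.choose k : ℤ) * E (n - k) else 0) = 0)
    (n M : ℕ) :
    ∑ j ∈ range M, (-1 : K) ^ j * (2 * (2 * ((j : K) + 1)) ^ n)
      = eulerShift E n (1 : K) - (-1) ^ M * eulerShift E n (2 * (M : K) + 1) := by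
  induction M with
  | zero => simp
  | succ M ih =>
    rw [sum_range_succ, ih, ← eulerShift_add hE0 hE n (2 * ((M : K) + 1))]
    have e : 2 * ((M : K) + 1) - 1 = 2 * M + 1 := by ring
    rw [e]
    push_cast
    ring

end Euler

/-! ### Computations modulo `p = 2m + 1` -/

section ModP

variable {p : ℕ} [Fact p.Prime]

lemma natCast_ne_zero_of_lt {i : ℕ} (h0 : 0 < i) (h : i < p) : (i : ZMod p) ≠ 0 := by
  rw [Ne, ZMod.natCast_eq_zero_iff]
  exact Nat.not_dvd_of_pos_of_lt h0 h

lemma choose_cast_ne_zero {n k : ℕ} (hk : k ≤ n) (h : n < p) : (n.choose k : ZMod p) ≠ 0 := by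
  rw [Ne, ZMod.natCast_eq_zero_iff]
  intro hd
  have h1 : p ∣ n.factorial := by
    rw [← Nat.choose_mul_factorial_mul_factorial hk, mul_assoc]
    exact hd.mul_right _
  have := ((Fact.out : p.Prime).dvd_factorial).1 h1
  omega

lemma two_mul_add_one_eq_zero {m : ℕ} (hm : p = 2 * m + 1) : 2 * (m : ZMod p) + 1 = 0 := by
  have h := congrArg (Nat.cast (R := ZMod p)) hm
  rw [ZMod.natCast_self] at h
  push_cast at h
  exact h.symm

lemma centralBinom_eq_neg_four_pow_mul {m : ℕ} (hm : p = 2 * m + 1) (k : ℕ) (hk : k ≤ m) :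
    (((2 * k).choose k : ℕ) : ZMod p) = (-4) ^ k * (m.choose k : ZMod p) := by
  have hz := two_mul_add_one_eq_zero hm
  induction k with
  | zero => simp
  | succ k ih =>
    have ih := ih (by omega)
    have hk1 : ((k : ZMod p) + 1) ≠ 0 := by
      exact_mod_cast natCast_ne_zero_of_lt (p := p) (i := k + 1) (by omega) (by omega)
    have e1 := congrArg (Nat.cast (R := ZMod p)) (Nat.succ_mul_centralBinom_succ k)
    have e2 := congrArg (Nat.cast (R := ZMod p)) (Nat.choose_succ_right_eq m k)
    simp only [Nat.centralBinom] at e1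
    rw [Nat.cast_mul, Nat.cast_mul, Nat.cast_sub (by omega)] at e2
    push_cast at e1 e2
    rw [ih] at e1
    apply mul_left_cancel₀ hk1
    rw [e1, pow_succ]
    linear_combination (4 * (-4) ^ k) * e2 + 2 * (-4) ^ k * (m.choose k : ZMod p) * hz

/-- Fermat's little theorem turns inverse squares into `(p-3)`-rd powers. -/
lemma pow_sub_three (hp3 : 3 < p) {x : ZMod p} (hx : x ≠ 0) : x ^ (p - 3) = 1 / x ^ 2 := by
  have h := ZMod.pow_card_sub_one_eq_one hx
  have e : p - 1 = (p - 3) + 2 := by omega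
  rw [e, pow_add] at h
  field_simp
  exact h

lemma sum_inv_sq_eq_zero {m : ℕ} (hm : p = 2 * m + 1) (hp3 : 3 < p) :
    ∑ j ∈ range m, 1 / ((j : ZMod p) + 1) ^ 2 = 0 := by
  have hz := two_mul_add_one_eq_zero hm
  have h := FiniteField.sum_pow_lt_card_sub_one (ZMod p) (p - 3) (by rw [ZMod.card]; omega)
  have he : Even (p - 3) := ⟨m - 1, by omega⟩
  have hr : ∑ x : ZMod p, x ^ (p - 3) = ∑ i ∈ range p, (i : ZMod p) ^ (p - 3) := by
    symm
    refine sum_bij (fun i _ => (i : ZMod p)) (fun _ _ => mem_univ _) ?_ ?_ (fun _ _ => rfl)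
    · intro a ha b hb hab
      have := (ZMod.natCast_eq_natCast_iff' a b p).1 hab
      rwa [Nat.mod_eq_of_lt (mem_range.1 ha), Nat.mod_eq_of_lt (mem_range.1 hb)] at this
    · intro b _
      exact ⟨b.val, mem_range.2 (ZMod.val_lt b), ZMod.natCast_zmod_val b⟩
  rw [hr] at h
  have hp : range p = range (m + m + 1) := by rw [hm, two_mul]
  rw [hp, sum_range_succ', sum_range_add] at h
  -- the upper half of the residues is the negative of the lower half
  have hrefl : ∑ x ∈ range m, (((m + x + 1 : ℕ) : ZMod p)) ^ (p - 3)
      = ∑ x ∈ range m, (((x + 1 : ℕ) : ZMod p)) ^ (p - 3) := by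
    rw [← sum_range_reflect]
    refine sum_congr rfl fun x hx => ?_
    have hx := mem_range.1 hx
    rw [← he.neg_pow]
    congr 1
    have : m + (m - 1 - x) + 1 + (x + 1) = 2 * m + 1 := by omega
    have := congrArg (Nat.cast (R := ZMod p)) this
    push_cast at this ⊢
    linear_combination -this - hz
  rw [hrefl, Nat.cast_zero, zero_pow (by omega), add_zero, ← two_mul] at h
  have h2 : (2 : ZMod p) ≠ 0 := by
    exact_mod_cast natCast_ne_zero_of_lt (p := p) (i := 2) (by omega) (by omega)
  rw [← (mul_eq_zero.1 h).resolve_left h2]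
  refine sum_congr rfl fun x hx => ?_
  have hx := mem_range.1 hx
  rw [pow_sub_three hp3 (natCast_ne_zero_of_lt (by omega) (by omega))]
  push_cast
  rfl

lemma sum_alternating_inv_sq {E : ℕ → ℤ} (hE0 : E 0 = 1)
    (hE : ∀ n : ℕ, 1 ≤ n →
      (∑ k ∈ range (n + 1), if 2 ∣ k then (n.choose k : ℤ) * E (n - k) else 0) = 0)
    {m : ℕ} (hm : p = 2 * m + 1) (hp3 : 3 < p) :
    ∑ j ∈ range m, (-1 : ZMod p) ^ (j + 1) / ((j : ZMod p) + 1) ^ 2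
      = 2 * (-1) ^ m * (E (p - 3) : ZMod p) := by
  have h := eulerShift_alternating_sum (K := ZMod p) hE0 hE (p - 3) m
  have h2 : (2 : ZMod p) ≠ 0 := by
    exact_mod_cast natCast_ne_zero_of_lt (p := p) (i := 2) (by omega) (by omega)
  rw [two_mul_add_one_eq_zero hm, eulerShift_zero,
    eulerShift_one hE (p - 3) (by omega) ⟨m - 1, by omega⟩] at h
  have e : ∀ j ∈ range m, (-1 : ZMod p) ^ (j + 1) / ((j : ZMod p) + 1) ^ 2
      = (-2) * ((-1 : ZMod p) ^ j * (2 * (2 * ((j : ZMod p) + 1)) ^ (p - 3))) := by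
    intro j hj
    have hj := mem_range.1 hj
    have hj1 : ((j : ZMod p) + 1) ≠ 0 := by
      exact_mod_cast natCast_ne_zero_of_lt (p := p) (i := j + 1) (by omega) (by omega)
    rw [pow_sub_three hp3 (mul_ne_zero h2 hj1), pow_succ]
    field_simp
  rw [sum_congr rfl e, ← mul_sum, h]
  ring

lemma sum_zmod_eq {E : ℕ → ℤ} (hE0 : E 0 = 1)
    (hE : ∀ n : ℕ, 1 ≤ n →
      (∑ k ∈ range (n + 1), if 2 ∣ k then (n.choose k : ℤ) * E (n - k) else 0) = 0)
    {m : ℕ} (hm : p = 2 * m + 1) (hp3 : 3 < p) :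
    ∑ k ∈ range m, (4 : ZMod p) ^ (k + 1) /
        ((2 * ((k : ZMod p) + 1) - 1) * ((2 * (k + 1)).choose (k + 1) : ℕ))
      = (E (p - 3) : ZMod p) - 1 + (-1) ^ m := by
  have hz := two_mul_add_one_eq_zero hm
  have hlt : ∀ i < m + 1, ((i : ZMod p) + 1) ≠ 0 := fun i hi => by
    exact_mod_cast natCast_ne_zero_of_lt (p := p) (i := i + 1) (by omega) (by omega)
  have h2 : (2 : ZMod p) ≠ 0 := by
    exact_mod_cast natCast_ne_zero_of_lt (p := p) (i := 2) (by omega) (by omega)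
  have h4 : (4 : ZMod p) ≠ 0 := by
    have : (4 : ZMod p) = 2 * 2 := by norm_num
    rw [this]; exact mul_ne_zero h2 h2
  have hs : ((-1 : ZMod p) ^ m) * (-1) ^ m = 1 := by
    rw [← mul_pow]; simp
  have step : ∑ k ∈ range m, (4 : ZMod p) ^ (k + 1) /
        ((2 * ((k : ZMod p) + 1) - 1) * ((2 * (k + 1)).choose (k + 1) : ℕ))
      = (-(-1) ^ m / 2) * ∑ k ∈ range m, (-1 : ZMod p) ^ k / (((k : ZMod p) + 1) * m.choose k) := by
    rw [← sum_range_reflect, mul_sum]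
    refine sum_congr rfl fun k hk => ?_
    have hk := mem_range.1 hk
    have e : m - 1 - k + 1 = m - k := by omega
    have ec : ((m - 1 - k : ℕ) : ZMod p) + 1 = m - k := by
      rw [← Nat.cast_sub hk.le, ← e]; push_cast; rfl
    rw [ec, e, centralBinom_eq_neg_four_pow_mul hm _ (by omega), Nat.choose_symm hk.le]
    have a1 := hlt k (by omega)
    have a2 := choose_cast_ne_zero (p := p) hk.le (by omega)
    have d : 2 * ((m : ZMod p) - k) - 1 = -2 * (k + 1) := by linear_combination hz
    have s : (-1 : ZMod p) ^ m = (-1) ^ (m - k) * (-1) ^ k := by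
      rw [← pow_add]; congr 1; omega
    have s1 : (-1 : ZMod p) ^ (m - k) * (-1) ^ (m - k) = 1 := by
      rw [← mul_pow]; simp
    have s2 : (-1 : ZMod p) ^ k * (-1) ^ k = 1 := by
      rw [← mul_pow]; simp
    have f : (-4 : ZMod p) ^ (m - k) = (-1) ^ (m - k) * 4 ^ (m - k) := by
      rw [← mul_pow]; norm_num
    rw [d, f, s]
    have b1 : (-1 : ZMod p) ^ (m - k) ≠ 0 := pow_ne_zero _ (by simp)
    field_simp
    linear_combination s1 * (-1 : ZMod p) ^ k * (-1) ^ k + s2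
  have hG := sum_inv_succ_mul_choose (K := ZMod p) m
    (fun i hi k hk => choose_cast_ne_zero hk (by omega)) (fun i hi => hlt i (by omega))
  have hS : ∑ j ∈ range m, (1 + 2 * (-1 : ZMod p) ^ (j + 1)) / ((j : ZMod p) + 1) ^ 2
      = 4 * (-1) ^ m * (E (p - 3) : ZMod p) := by
    have : ∀ j ∈ range m, (1 + 2 * (-1 : ZMod p) ^ (j + 1)) / ((j : ZMod p) + 1) ^ 2
        = 1 / ((j : ZMod p) + 1) ^ 2
          + 2 * ((-1 : ZMod p) ^ (j + 1) / ((j : ZMod p) + 1) ^ 2) := by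
      intro j _; ring
    rw [sum_congr rfl this, sum_add_distrib, ← mul_sum, sum_inv_sq_eq_zero hm hp3,
      sum_alternating_inv_sq hE0 hE hm hp3]
    ring
  rw [sum_range_succ, sum_range_succ, hS, Nat.choose_self] at hG
  -- in `ZMod p`, `m + 1 = 1/2`
  have hm1 : (m : ZMod p) + 1 = 1 / 2 := by field_simp; linear_combination hz
  rw [hm1, pow_succ] at hG
  rw [step, eq_sub_of_add_eq hG]
  push_cast
  field_simp
  linear_combination (4 * (E (p - 3) : ZMod p) - 4) * hs

end ModP

/-! ### Reduction of rationals modulo `p` -/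

/-- The rational `q` is `p`-integral with reduction `z` modulo `p`. -/
def ReducesTo (p : ℕ) [Fact p.Prime] (q : ℚ) (z : ZMod p) : Prop :=
  ∃ a b : ℤ, (b : ZMod p) ≠ 0 ∧ q = a / b ∧ z = a / b

section Reduction

variable {p : ℕ} [Fact p.Prime]

lemma ne_zero_of_cast_ne_zero {b : ℤ} (hb : (b : ZMod p) ≠ 0) : (b : ℚ) ≠ 0 := by
  intro h
  have : b = 0 := by exact_mod_cast h
  simp [this] at hb

lemma ReducesTo.sub {q r : ℚ} {y z : ZMod p} (h : ReducesTo p q y) (h' : ReducesTo p r z) :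
    ReducesTo p (q - r) (y - z) := by
  obtain ⟨a, b, hb, rfl, rfl⟩ := h
  obtain ⟨c, d, hd, rfl, rfl⟩ := h'
  have := ne_zero_of_cast_ne_zero hb
  have := ne_zero_of_cast_ne_zero hd
  refine ⟨a * d - c * b, b * d, by push_cast; exact mul_ne_zero hb hd, ?_, ?_⟩ <;>
    push_cast <;> field_simp

lemma ReducesTo.add {q r : ℚ} {y z : ZMod p} (h : ReducesTo p q y) (h' : ReducesTo p r z) :
    ReducesTo p (q + r) (y + z) := by
  obtain ⟨a, b, hb, rfl, rfl⟩ := h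
  obtain ⟨c, d, hd, rfl, rfl⟩ := h'
  have := ne_zero_of_cast_ne_zero hb
  have := ne_zero_of_cast_ne_zero hd
  refine ⟨a * d + c * b, b * d, by push_cast; exact mul_ne_zero hb hd, ?_, ?_⟩ <;>
    push_cast <;> field_simp

lemma ReducesTo.sum {f : ℕ → ℚ} {g : ℕ → ZMod p} (n : ℕ)
    (h : ∀ k < n, ReducesTo p (f k) (g k)) :
    ReducesTo p (∑ k ∈ range n, f k) (∑ k ∈ range n, g k) := by
  induction n with
  | zero => exact ⟨0, 1, by simp, by simp, by simp⟩
  | succ n ih =>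
    rw [sum_range_succ, sum_range_succ]
    exact (ih fun k hk => h k (by omega)).add (h n (by omega))

lemma ReducesTo.padicNorm_le {q : ℚ} (h : ReducesTo p q 0) :
    padicNorm p q ≤ (p : ℚ) ^ (-1 : ℤ) := by
  obtain ⟨a, b, hb, rfl, h0⟩ := h
  have ha : (a : ZMod p) = 0 := by
    rcases div_eq_zero_iff.1 h0.symm with h | h
    · exact h
    · exact absurd h hb
  have hb' : padicNorm p (b : ℚ) = 1 := by
    rw [padicNorm.int_eq_one_iff, ← ZMod.intCast_zmod_eq_zero_iff_dvd]
    exact hb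
  rw [padicNorm.div, hb', div_one]
  have := (padicNorm.dvd_iff_norm_le (p := p) (n := 1) (z := a)).1
    (by simpa using (ZMod.intCast_zmod_eq_zero_iff_dvd a p).1 ha)
  exact_mod_cast this

end Reduction


/-- Sun: for an odd prime `p`,
`∑_{k=1}^{(p-1)/2} 4^k/((2k-1)·C(2k,k)) ≡ E_{p-3} - 1 + (-1)^((p-1)/2) (mod p)`,
where `E` is the sequence of Euler numbers, characterized by `E 0 = 1` and
`∑_{k ≤ n, 2 ∣ k} C(n,k) E_{n-k} = 0` for `n ≥ 1`. -/
theorem sun_lemma_2_2_first (p : ℕ) (hp : p.Prime) (hodd : Odd p)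
    (E : ℕ → ℤ) (hE0 : E 0 = 1)
    (hE : ∀ n : ℕ, 1 ≤ n →
      (∑ k ∈ Finset.range (n + 1),
        if 2 ∣ k then (n.choose k : ℤ) * E (n - k) else 0) = 0) :
    padicNorm p ((∑ k ∈ Finset.Icc 1 ((p - 1) / 2),
        (4 : ℚ) ^ k / ((2 * (k : ℚ) - 1) * (Nat.choose (2 * k) k : ℚ))) -
      ((E (p - 3) : ℚ) - 1 + (-1) ^ ((p - 1) / 2))) ≤ (p : ℚ) ^ (-1 : ℤ) := by
  obtain ⟨m, hm⟩ := hodd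
  have : Fact p.Prime := ⟨hp⟩
  have hmm : (p - 1) / 2 = m := by omega
  rw [hmm]
  have hp2 := hp.two_le
  rcases Nat.lt_or_ge 3 p with hp3 | hp3
  · apply ReducesTo.padicNorm_le
    have hz := two_mul_add_one_eq_zero hm
    have hI : Finset.Icc 1 m = Finset.Ico 1 (m + 1) := rfl
    rw [hI, Finset.sum_Ico_eq_sum_range, Nat.add_sub_cancel]
    rw [← sub_self ((E (p - 3) : ZMod p) - 1 + (-1) ^ m)]
    apply ReducesTo.sub
    · rw [← sum_zmod_eq hE0 hE hm hp3]
      apply ReducesTo.sum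
      intro k hk
      refine ⟨4 ^ (k + 1), (2 * ((k : ℤ) + 1) - 1) * ((2 * (k + 1)).choose (k + 1) : ℕ),
        ?_, ?_, ?_⟩
      · push_cast
        apply mul_ne_zero
        · have h := natCast_ne_zero_of_lt (p := p) (i := 2 * k + 1) (by omega) (by omega)
          push_cast at h
          intro h0; apply h; linear_combination h0
        · exact choose_cast_ne_zero (by omega) (by omega)
      · rw [add_comm 1 k]; push_cast; rfl
      · push_cast; rfl
    · exact ⟨E (p - 3) - 1 + (-1) ^ m, 1, by simp, by simp, by simp⟩
  · obtain rfl : m = 1 := by omega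
    obtain rfl : p = 3 := by omega
    have e : (∑ k ∈ Finset.Icc (1 : ℕ) 1,
        (4 : ℚ) ^ k / ((2 * (k : ℚ) - 1) * (Nat.choose (2 * k) k : ℚ))) -
        ((E (3 - 3) : ℚ) - 1 + (-1) ^ 1) = ((3 : ℕ) : ℚ) := by
      simp [hE0, Nat.choose]
      norm_num
    rw [e, padicNorm.padicNorm_p (by norm_num)]
    simp
end

section
/- For every positive integer n, the identity (1/2)·∑_{k=1}^{n} 4^k/(k·C(2k,k)) = 4^n/C(2n,n) − 1 holds in the rational numbers. -/
/-- For every positive integer `n`,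
`(1/2)·∑_{k=1}^{n} 4^k/(k·C(2k,k)) = 4^n/C(2n,n) - 1` in `ℚ`. -/
theorem half_sum_four_pow_div_central_binom (n : ℕ) (hn : 1 ≤ n) :
    (1 / 2 : ℚ) * ∑ k ∈ Finset.Icc 1 n,
        (4 : ℚ) ^ k / ((k : ℚ) * (Nat.choose (2 * k) k : ℚ)) =
      (4 : ℚ) ^ n / (Nat.choose (2 * n) n : ℚ) - 1 := by
  -- The sum telescopes, and the identity also holds for `n = 0`, where the induction starts.
  clear hn
  induction n with
  | zero => simp
  | succ m ih =>
    rw [Finset.sum_Icc_succ_top (by omega), mul_add, ih]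
    simp only [← Nat.centralBinom_eq_two_mul_choose]
    have hrec : ((m : ℚ) + 1) * (Nat.centralBinom (m + 1) : ℚ)
        = 2 * (2 * m + 1) * (Nat.centralBinom m : ℚ) := by
      exact_mod_cast Nat.succ_mul_centralBinom_succ m
    have hc : (Nat.centralBinom m : ℚ) ≠ 0 := by exact_mod_cast Nat.centralBinom_ne_zero m
    have hm : (m : ℚ) + 1 ≠ 0 := by positivity
    have hm' : (2 * m : ℚ) + 1 ≠ 0 := by positivity
    -- Eliminate `C(2m+2, m+1)` in favour of `C(2m, m)`.
    have hd : (Nat.centralBinom (m + 1) : ℚ)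
        = 2 * (2 * m + 1) * (Nat.centralBinom m : ℚ) / (m + 1) := by
      rw [eq_div_iff hm, ← hrec, mul_comm]
    rw [hd]
    push_cast
    field_simp
    ring
end
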